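/- arXiv:2209.03553 — 3 statements merged into one kernel-verified Lean document; each statement's English description precedes it below -/
import Mathlib

section
/- Let (V, 𝒮) be a simplicial fan supported on ℝⁿ_{≥0}, let E ∈ 𝒮, and let F ∈ lk(E) be a face with a full partition F = F₁ ⊔ F₂ ⊔ 𝒜_F. Let G ∈ lk(E ∪ F), and consider F′ := F ∪ G ∈ lk(E). Set 𝒜̂ := {A ∈ 𝒜_F : V_A ⊆ σ(G)}, F₁′ := F₁ ∪ 𝒜̂, and F₂′ := F₂ ∪ G. Then the set of apices of F′ (as a face of lk(E)) is 𝒜_{F′} = 𝒜_F ∖ 𝒜̂, and F′ = F₁′ ⊔ F₂′ ⊔ 𝒜_{F′} is a full partition of F′. -/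
open scoped Classical

noncomputable section

/-- The conical hull (set of nonnegative linear combinations) of a finite set of
vectors in `ℝⁿ`. -/
def coneOf {n : ℕ} (F : Finset (Fin n → ℝ)) : Set (Fin n → ℝ) :=
  {x | ∃ lam : (Fin n → ℝ) → ℝ, (∀ v ∈ F, 0 ≤ lam v) ∧ x = ∑ v ∈ F, lam v • v}

/-- A simplicial fan supported on `ℝⁿ_{≥0}`, encoding a geometric triangulation of
the `(n-1)`-dimensional simplex: a finite vertex set `V ⊆ ℝⁿ_{≥0} ∖ {0}` together
with a downward-closed collection of linearly independent finite subsets of `V`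
(the faces, including `∅`) whose cones cover the nonnegative orthant and intersect
along common faces. -/
structure SimplicialFan (n : ℕ) where
  verts : Finset (Fin n → ℝ)
  faces : Finset (Finset (Fin n → ℝ))
  verts_nonneg : ∀ v ∈ verts, ∀ i, 0 ≤ v i
  verts_ne_zero : ∀ v ∈ verts, v ≠ 0
  faces_subset_verts : ∀ F ∈ faces, F ⊆ verts
  empty_mem : ∅ ∈ faces
  indep : ∀ F ∈ faces, LinearIndependent ℝ (fun v : {x // x ∈ F} => (v : Fin n → ℝ))
  down_closed : ∀ F ∈ faces, ∀ F' ⊆ F, F' ∈ faces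
  covers : (⋃ F ∈ faces, coneOf F) = {x : Fin n → ℝ | ∀ i, 0 ≤ x i}
  inter_cone : ∀ F ∈ faces, ∀ F' ∈ faces, coneOf F ∩ coneOf F' = coneOf (F ∩ F')

/-- `σ(F)`: the set of coordinates `ℓ` such that some `v ∈ F` has `v_ℓ ≠ 0`. -/
def suppSet {n : ℕ} (F : Finset (Fin n → ℝ)) : Finset (Fin n) :=
  Finset.univ.filter fun ℓ => ∃ v ∈ F, v ℓ ≠ 0

/-- A face is interior if its support is all of `{1,…,n}`. -/
def IsInteriorFace {n : ℕ} (F : Finset (Fin n → ℝ)) : Prop :=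
  suppSet F = Finset.univ

/-- The excess `e(F) = |σ(F)| − |F|`. -/
def excess {n : ℕ} (F : Finset (Fin n → ℝ)) : ℕ :=
  (suppSet F).card - F.card

/-- The link of a face `E`: faces `F` with `F ∩ E = ∅` and `F ∪ E ∈ 𝒮`. -/
def link {n : ℕ} (S : SimplicialFan n) (E : Finset (Fin n → ℝ)) :
    Finset (Finset (Fin n → ℝ)) :=
  S.faces.filter fun F => F ∩ E = ∅ ∧ F ∪ E ∈ S.faces

/-- `F ∈ lk(E)` is a pyramid with apex `A ∈ F` if `F ∪ E` is interior but
`(F ∪ E) ∖ {A}` is not. -/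
def IsPyramidApex {n : ℕ} (E F : Finset (Fin n → ℝ)) (A : Fin n → ℝ) : Prop :=
  A ∈ F ∧ IsInteriorFace (F ∪ E) ∧ ¬ IsInteriorFace ((F ∪ E).erase A)

/-- `𝒜_F`: the set of apices of `F` (relative to `E`). -/
def apices {n : ℕ} (E F : Finset (Fin n → ℝ)) : Finset (Fin n → ℝ) :=
  F.filter fun A => IsPyramidApex E F A

/-- `V_A = {1,…,n} ∖ σ((F ∪ E) ∖ {A})`. -/
def baseDirs {n : ℕ} (E F : Finset (Fin n → ℝ)) (A : Fin n → ℝ) : Finset (Fin n) :=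
  Finset.univ \ suppSet ((F ∪ E).erase A)

/-- `F` is a U-pyramid if `|V_A| = 1` for some apex `A` of `F`. -/
def IsUPyramid {n : ℕ} (E F : Finset (Fin n → ℝ)) : Prop :=
  ∃ A ∈ apices E F, (baseDirs E F A).card = 1

/-- A full partition of `F ∈ lk(E)`: a decomposition `F = F₁ ⊔ F₂ ⊔ 𝒜_F` with
`F₁ ∪ 𝒜_F ∪ E` interior and `σ(F₂ ∪ E) = {1,…,n} ∖ ⋃_{A ∈ 𝒜_F} V_A`. -/
def IsFullPartition {n : ℕ} (E F F₁ F₂ : Finset (Fin n → ℝ)) : Prop :=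
  F = F₁ ∪ F₂ ∪ apices E F ∧
  Disjoint F₁ F₂ ∧ Disjoint F₁ (apices E F) ∧ Disjoint F₂ (apices E F) ∧
  IsInteriorFace (F₁ ∪ apices E F ∪ E) ∧
  suppSet (F₂ ∪ E) = Finset.univ \ (apices E F).biUnion (baseDirs E F)

/-- The local `h`-polynomial
`ℓ(𝒮, E; t) = Σ_{F ∈ 𝒮, E ⊆ F} (−1)^{n−|F|} t^{(n−|E|)−e(F)} (t−1)^{e(F)}`. -/
def localH {n : ℕ} (S : SimplicialFan n) (E : Finset (Fin n → ℝ)) : Polynomial ℤ :=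
  ∑ F ∈ S.faces.filter (fun F => E ⊆ F),
    Polynomial.C ((-1 : ℤ) ^ (n - F.card)) *
      Polynomial.X ^ ((n - E.card) - excess F) * (Polynomial.X - 1) ^ (excess F)

/-! Adjoining to `F` a set `G` disjoint from `E ∪ F` replaces each `V_A` by `V_A ∖ σ(G)` and creates
no apex inside `G`, because `F ∪ E` is already interior. So an apex `A` survives exactly when
`V_A ⊈ σ(G)`, and the union of the sets `V_A` over the apices loses exactly the directions `σ(G)`
that the second block of the partition gains. -/

section Support

variable {n : ℕ} {F G : Finset (Fin n → ℝ)}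

theorem suppSet_union (F G : Finset (Fin n → ℝ)) :
    suppSet (F ∪ G) = suppSet F ∪ suppSet G := by
  simp only [suppSet, Finset.mem_union, or_and_right, exists_or, Finset.filter_or]

theorem suppSet_mono (h : F ⊆ G) : suppSet F ⊆ suppSet G := by
  rw [← Finset.union_eq_right.mpr h, suppSet_union]
  exact Finset.subset_union_left

theorem IsInteriorFace.mono (hF : IsInteriorFace F) (h : F ⊆ G) : IsInteriorFace G :=
  Finset.univ_subset_iff.mp (hF.symm.subset.trans (suppSet_mono h))

end Support

section Apices

variable {n : ℕ} {E F G : Finset (Fin n → ℝ)} {A : Fin n → ℝ}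

theorem apices_subset : apices E F ⊆ F :=
  Finset.filter_subset _ _

theorem isInteriorFace_erase_iff_baseDirs_eq_empty :
    IsInteriorFace ((F ∪ E).erase A) ↔ baseDirs E F A = ∅ := by
  rw [IsInteriorFace, baseDirs, Finset.sdiff_eq_empty_iff_subset, Finset.univ_subset_iff]

theorem mem_apices_iff_baseDirs_nonempty (hFE : IsInteriorFace (F ∪ E)) :
    A ∈ apices E F ↔ A ∈ F ∧ (baseDirs E F A).Nonempty := by
  simp only [apices, Finset.mem_filter, IsPyramidApex, hFE, true_and, and_self_left,
    isInteriorFace_erase_iff_baseDirs_eq_empty, Finset.nonempty_iff_ne_empty, ne_eq]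

theorem baseDirs_union_of_notMem (hA : A ∉ G) :
    baseDirs E (F ∪ G) A = baseDirs E F A \ suppSet G := by
  rw [baseDirs, baseDirs, Finset.union_right_comm, Finset.erase_union_distrib,
    Finset.erase_eq_of_notMem hA, suppSet_union, sdiff_sdiff_left, Finset.sup_eq_union]

theorem baseDirs_union_eq_empty_of_notMem (hFE : IsInteriorFace (F ∪ E)) (hA : A ∉ F ∪ E) :
    baseDirs E (F ∪ G) A = ∅ := by
  refine isInteriorFace_erase_iff_baseDirs_eq_empty.mp (hFE.mono ?_)
  exact Finset.subset_erase.mpr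
    ⟨Finset.union_subset_union_left Finset.subset_union_left, hA⟩

/-- The set `𝒜̂` of the apices `A` of `F` whose `V_A` is covered by `σ(G)`: these are the ones that
stop being apices when a set `G` disjoint from `E ∪ F` is adjoined to `F`. -/
def coveredApices (E F G : Finset (Fin n → ℝ)) : Finset (Fin n → ℝ) :=
  (apices E F).filter fun A => baseDirs E F A ⊆ suppSet G

theorem coveredApices_subset_apices : coveredApices E F G ⊆ apices E F :=
  Finset.filter_subset _ _

theorem apices_union (hFE : IsInteriorFace (F ∪ E)) (hG : Disjoint G (E ∪ F)) :
    apices E (F ∪ G) = apices E F \ coveredApices E F G := by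
  have hFGE : IsInteriorFace (F ∪ G ∪ E) :=
    hFE.mono (Finset.union_subset_union_left Finset.subset_union_left)
  ext A
  rw [Finset.mem_sdiff, coveredApices, Finset.mem_filter, mem_apices_iff_baseDirs_nonempty hFGE,
    mem_apices_iff_baseDirs_nonempty hFE]
  by_cases hAG : A ∈ G
  · have hAFE : A ∉ F ∪ E := Finset.union_comm E F ▸ Finset.disjoint_left.mp hG hAG
    have hAF : A ∉ F := fun hA => hAFE (Finset.mem_union_left E hA)
    simp [baseDirs_union_eq_empty_of_notMem hFE hAFE, hAF]
  · rw [baseDirs_union_of_notMem hAG, Finset.sdiff_nonempty]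
    grind

theorem biUnion_baseDirs_union (hFE : IsInteriorFace (F ∪ E)) (hG : Disjoint G (E ∪ F)) :
    (apices E (F ∪ G)).biUnion (baseDirs E (F ∪ G)) =
      (apices E F).biUnion (baseDirs E F) \ suppSet G := by
  have hbase : ∀ A ∈ apices E F, baseDirs E (F ∪ G) A = baseDirs E F A \ suppSet G :=
    fun A hA => baseDirs_union_of_notMem
      (Finset.disjoint_right.mp hG (Finset.mem_union_right E (apices_subset hA)))
  ext ℓ
  simp only [apices_union hFE hG, coveredApices, Finset.mem_biUnion, Finset.mem_sdiff,
    Finset.mem_filter]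
  grind

end Apices

section FullPartition

variable {n : ℕ} {E F F₁ F₂ G : Finset (Fin n → ℝ)}

theorem IsFullPartition.left_subset (h : IsFullPartition E F F₁ F₂) : F₁ ⊆ F := by
  rw [h.1]
  exact Finset.subset_union_left.trans Finset.subset_union_left

theorem IsFullPartition.isInteriorFace_union (h : IsFullPartition E F F₁ F₂) :
    IsInteriorFace (F ∪ E) := by
  have hsub := h.left_subset
  obtain ⟨-, -, -, -, hint, -⟩ := h
  exact hint.mono
    (Finset.union_subset_union_left (Finset.union_subset hsub apices_subset))

theorem IsFullPartition.suppSet_union_union_eq_sdiff (h : IsFullPartition E F F₁ F₂)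
    (hG : Disjoint G (E ∪ F)) :
    suppSet (F₂ ∪ G ∪ E) =
      Finset.univ \ (apices E (F ∪ G)).biUnion (baseDirs E (F ∪ G)) := by
  rw [biUnion_baseDirs_union h.isInteriorFace_union hG]
  obtain ⟨-, -, -, -, -, hsupp⟩ := h
  rw [Finset.union_right_comm, suppSet_union, hsupp, sdiff_sdiff_right',
    Finset.sup_eq_union, Finset.inf_eq_inter, Finset.univ_inter]

theorem IsFullPartition.union (h : IsFullPartition E F F₁ F₂) (hG : Disjoint G (E ∪ F)) :
    IsFullPartition E (F ∪ G) (F₁ ∪ coveredApices E F G) (F₂ ∪ G) := by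
  have hap : apices E (F ∪ G) = apices E F \ coveredApices E F G :=
    apices_union h.isInteriorFace_union hG
  have hcov : coveredApices E F G ∪ apices E (F ∪ G) = apices E F :=
    hap ▸ Finset.union_sdiff_of_subset coveredApices_subset_apices
  have hcov_disj : Disjoint (coveredApices E F G) (apices E (F ∪ G)) :=
    hap ▸ Finset.disjoint_sdiff
  have hcov_sub : coveredApices E F G ⊆ apices E F := coveredApices_subset_apices
  have hap_sub : apices E (F ∪ G) ⊆ apices E F := hap ▸ Finset.sdiff_subset
  have hsupp := h.suppSet_union_union_eq_sdiff hG
  have hFG : Disjoint F G := (hG.mono_right Finset.subset_union_right).symm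
  have hF₁G : Disjoint F₁ G := hFG.mono_left h.left_subset
  have hAG : Disjoint (apices E F) G := hFG.mono_left apices_subset
  obtain ⟨hF, h₁₂, h₁A, h₂A, hint, -⟩ := h
  refine ⟨?_, ?_, ?_, ?_, ?_, hsupp⟩
  · calc F ∪ G = F₁ ∪ F₂ ∪ (coveredApices E F G ∪ apices E (F ∪ G)) ∪ G := by rw [hcov, ← hF]
      _ = F₁ ∪ coveredApices E F G ∪ (F₂ ∪ G) ∪ apices E (F ∪ G) := by ac_rfl
  · simp only [Finset.disjoint_union_left, Finset.disjoint_union_right]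
    exact ⟨⟨h₁₂, h₂A.symm.mono_left hcov_sub⟩, hF₁G, hAG.mono_left hcov_sub⟩
  · exact Finset.disjoint_union_left.mpr ⟨h₁A.mono_right hap_sub, hcov_disj⟩
  · exact Finset.disjoint_union_left.mpr ⟨h₂A.mono_right hap_sub, (hAG.mono_left hap_sub).symm⟩
  · rwa [Finset.union_assoc F₁, hcov]

theorem fullPartition_inherit_general (h : IsFullPartition E F F₁ F₂)
    (hG : Disjoint G (E ∪ F)) :
    apices E (F ∪ G) = apices E F \ coveredApices E F G ∧
      IsFullPartition E (F ∪ G) (F₁ ∪ coveredApices E F G) (F₂ ∪ G) :=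
  ⟨apices_union h.isInteriorFace_union hG, h.union hG⟩

theorem disjoint_of_mem_link {S : SimplicialFan n} (hF : F ∈ link S E) : Disjoint F E :=
  Finset.disjoint_iff_inter_eq_empty.mpr (Finset.mem_filter.mp hF).2.1

end FullPartition

/-- Full partitions are inherited: if `F ∈ lk(E)` has a full partition
`F = F₁ ⊔ F₂ ⊔ 𝒜_F` and `G ∈ lk(E ∪ F)`, then for `F′ := F ∪ G` the apex set is
`𝒜_{F′} = 𝒜_F ∖ 𝒜̂`, where `𝒜̂ = {A ∈ 𝒜_F : V_A ⊆ σ(G)}`, and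
`F′ = (F₁ ∪ 𝒜̂) ⊔ (F₂ ∪ G) ⊔ 𝒜_{F′}` is a full partition of `F′`. -/
theorem fullPartition_inherit {n : ℕ} (S : SimplicialFan n)
    (E : Finset (Fin n → ℝ)) (hE : E ∈ S.faces)
    (F : Finset (Fin n → ℝ)) (hF : F ∈ link S E)
    (F₁ F₂ : Finset (Fin n → ℝ)) (hfull : IsFullPartition E F F₁ F₂)
    (G : Finset (Fin n → ℝ)) (hG : G ∈ link S (E ∪ F)) :
    apices E (F ∪ G) =
      apices E F \ ((apices E F).filter fun A => baseDirs E F A ⊆ suppSet G) ∧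
    IsFullPartition E (F ∪ G)
      (F₁ ∪ (apices E F).filter fun A => baseDirs E F A ⊆ suppSet G)
      (F₂ ∪ G) :=
  fullPartition_inherit_general hfull (disjoint_of_mem_link hG)

end
end

section
/- Let u₁,…,u_s ∈ ℝ^s be linearly independent vectors generating a cone C := {Σ λ_j u_j : λ_j ≥ 0}, and assume C is positive. Then there exists a unique permutation w of {1,…,s} such that the reordered tuple (u_{w(1)},…,u_{w(s)}) is positively ordered. -/
noncomputable section

/-- Projection of `ℝ^s` onto the first `k` coordinates. -/
def prProj {s : ℕ} (k : ℕ) (hk : k ≤ s) (x : Fin s → ℝ) : Fin k → ℝ :=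
  fun j => x (Fin.castLE hk j)

/-- The vector `(0,…,0,1) ∈ ℝ^k`. -/
def lastUnit (k : ℕ) : Fin k → ℝ :=
  fun j => if (j : ℕ) + 1 = k then 1 else 0

/-- A convex cone `C ⊆ ℝ^s` is positive if `(0,…,0,1) ∈ pr_k(C)` for every
`1 ≤ k ≤ s`. -/
def IsPositiveCone {s : ℕ} (C : Set (Fin s → ℝ)) : Prop :=
  ∀ k, 1 ≤ k → ∀ hk : k ≤ s, lastUnit k ∈ prProj k hk '' C

/-- A tuple `(v₁,…,v_m)` of vectors in `ℝ^m` is positively ordered if for every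
`1 ≤ k ≤ m` the cone in `ℝ^k` generated by `pr_k(v₁),…,pr_k(v_k)` is positive. -/
def PositivelyOrdered {m : ℕ} (v : Fin m → (Fin m → ℝ)) : Prop :=
  ∀ k, 1 ≤ k → ∀ hk : k ≤ m,
    IsPositiveCone {x : Fin k → ℝ | ∃ lam : Fin m → ℝ, (∀ i, 0 ≤ lam i) ∧
      (∀ i : Fin m, ¬ ((i : ℕ) < k) → lam i = 0) ∧
      x = ∑ i, lam i • prProj k hk (v i)}

/-!
Let `d` be the family dual to `u`, so that the coefficient of `u i` in `x` is `d i ⬝ᵥ x`. The cone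
spanned by `u` is positive iff the last nonzero entry of every `d i` is positive: if `d i` vanishes
beyond `k`, its value on every vector `(0,…,0,1,*,…,*)` with the `1` in place `k` is its `k`-th
entry; conversely, such a vector with sufficiently fast growing entries lies in the cone.

Omit `u i` and project the other vectors to the first `n - 1` coordinates. The result has a dual
family only if the last entry of `d i` is nonzero, and then it is obtained by clearing the last
entries of the other `d j` with `d i`. By the criterion its cone is positive iff `d i` is
colexicographically minimal among the `d j` with nonzero last entry, all scaled to last entry `1`.
Exactly one `i` has this property. Thus `u i` has to come last, and induction on the dimension
determines the order of the others.
-/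

open Matrix

/-- The first nonzero entry of `x` is `x k = 1`. Since `k` is counted from zero, this says that
`pr_{k+1}(x) = (0,…,0,1)`. -/
def HasLeadingOneAt {K : Type*} [Zero K] [One K] {n : ℕ} (k : Fin n) (x : Fin n → K) : Prop :=
  x k = 1 ∧ ∀ j < k, x j = 0

theorem HasLeadingOneAt.dotProduct_eq {K : Type*} [NonAssocSemiring K] {n : ℕ} {k : Fin n}
    {x f : Fin n → K} (hx : HasLeadingOneAt k x) (hf : ∀ l, k < l → f l = 0) :
    f ⬝ᵥ x = f k := by
  rw [dotProduct, Finset.sum_eq_single k, hx.1, mul_one]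
  · intro l _ hl
    rcases hl.lt_or_gt with hlk | hkl
    · rw [hx.2 l hlk, mul_zero]
    · rw [hf l hkl, zero_mul]
  · simp

theorem hasLeadingOneAt_castSucc_iff {K : Type*} [Zero K] [One K] {n : ℕ} {k : Fin n}
    {x : Fin (n + 1) → K} :
    HasLeadingOneAt k.castSucc x ↔ HasLeadingOneAt k (Fin.init x : Fin n → K) := by
  simp [HasLeadingOneAt, Fin.forall_fin_succ', Fin.init, (Fin.le_last _).not_gt]

theorem init_sum_smul {ι K : Type*} [Fintype ι] [Semiring K] {n : ℕ} (c : ι → K)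
    (u : ι → Fin (n + 1) → K) :
    (Fin.init (∑ i, c i • u i) : Fin n → K) = ∑ i, c i • (Fin.init (u i) : Fin n → K) := by
  ext l
  simp [Fin.init]

theorem dotProduct_eq_init_add {K : Type*} [NonUnitalNonAssocSemiring K] {n : ℕ}
    (f x : Fin (n + 1) → K) :
    f ⬝ᵥ x = (Fin.init f : Fin n → K) ⬝ᵥ Fin.init x + f (Fin.last n) * x (Fin.last n) :=
  Fin.sum_univ_castSucc _

section DualFamily

variable {ι κ : Type*} [Fintype κ]

/-- The family `d` is dual to the family `u` with respect to the dot product. -/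
structure IsDualFamily {R : Type*} [CommSemiring R] (u d : ι → κ → R) : Prop where
  dotProduct_self : ∀ i, d i ⬝ᵥ u i = 1
  dotProduct_of_ne : ∀ {i j}, i ≠ j → d i ⬝ᵥ u j = 0

variable [Fintype ι]

theorem IsDualFamily.dotProduct_sum_smul {R : Type*} [CommSemiring R] {u d : ι → κ → R}
    (hd : IsDualFamily u d) (c : ι → R) (i : ι) : d i ⬝ᵥ ∑ j, c j • u j = c i := by
  rw [dotProduct_sum, Finset.sum_eq_single i]
  · rw [dotProduct_smul, hd.dotProduct_self, smul_eq_mul, mul_one]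
  · intro j _ hj
    rw [dotProduct_smul, hd.dotProduct_of_ne hj.symm, smul_zero]
  · simp

theorem IsDualFamily.sum_dotProduct_smul {R : Type*} [CommRing R] {u d : ι → κ → R}
    (hd : IsDualFamily u d) (hcard : Fintype.card ι = Fintype.card κ) (x : κ → R) :
    ∑ i, (d i ⬝ᵥ x) • u i = x := by
  classical
  have hdu : of d * (of u)ᵀ = 1 := by
    ext i j
    rcases eq_or_ne i j with rfl | hij
    · exact (hd.dotProduct_self i).trans (one_apply_eq i).symm
    · exact (hd.dotProduct_of_ne hij).trans (one_apply_ne hij).symm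
  have hud : (of u)ᵀ * of d = 1 := (mul_eq_one_comm_of_card_eq _ _ _ hcard).1 hdu
  calc ∑ i, (d i ⬝ᵥ x) • u i = (of u)ᵀ *ᵥ (of d *ᵥ x) := by
        rw [mulVec_transpose, vecMul_eq_sum]; rfl
    _ = x := by rw [mulVec_mulVec, hud, one_mulVec]

theorem exists_isDualFamily_of_forall_dotProduct_eq_zero {K : Type*} [Field K] {u : ι → κ → K}
    (hcard : Fintype.card ι = Fintype.card κ)
    (hu : ∀ f : κ → K, (∀ i, f ⬝ᵥ u i = 0) → f = 0) : ∃ d, IsDualFamily u d := by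
  classical
  have hinj : Function.Injective (of u).mulVecLin := by
    refine (injective_iff_map_eq_zero _).2 fun f hf => hu f fun i => ?_
    rw [dotProduct_comm]
    exact congrFun hf i
  have hsurj : Function.Surjective (of u).mulVecLin :=
    (LinearMap.injective_iff_surjective_of_finrank_eq_finrank (by simp [hcard])).1 hinj
  choose d hd using fun i : ι => hsurj (Pi.single i 1)
  have hdot (i j : ι) : d i ⬝ᵥ u j = (Pi.single i 1 : ι → K) j := by
    rw [dotProduct_comm]
    exact congrFun (hd i) j
  exact ⟨d, fun i => by simp [hdot], fun hij => by simp [hdot, hij.symm]⟩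

end DualFamily

section ColexNonneg

variable {n : ℕ}

/-- The last nonzero entry of `f`, if any, is positive. Equivalently `f` is nonnegative in the
colexicographic order, for which Mathlib has no ordered group structure. -/
def ColexNonneg {K : Type*} [Zero K] [LE K] (f : Fin n → K) : Prop :=
  ∀ k, (∀ l, k < l → f l = 0) → 0 ≤ f k

theorem ColexNonneg.last_nonneg {K : Type*} [Zero K] [LE K] {f : Fin (n + 1) → K}
    (hf : ColexNonneg f) : 0 ≤ f (Fin.last n) :=
  hf _ fun l hl => absurd hl (Fin.le_last l).not_gt

theorem colexNonneg_init_iff {K : Type*} [Zero K] [Preorder K] {f : Fin (n + 1) → K}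
    (hf : f (Fin.last n) = 0) :
    ColexNonneg (Fin.init f : Fin n → K) ↔ ColexNonneg f := by
  simp [ColexNonneg, Fin.forall_fin_succ', Fin.init, hf]

theorem colexNonneg_smul_iff {K : Type*} [Ring K] [LinearOrder K] [IsStrictOrderedRing K] {c : K}
    (hc : 0 < c) {f : Fin n → K} : ColexNonneg (c • f) ↔ ColexNonneg f := by
  simp [ColexNonneg, hc, hc.ne']

theorem colexNonneg_sub_iff {K : Type*} [AddCommGroup K] [LinearOrder K] [IsOrderedAddMonoid K]
    {f g : Fin n → K} : ColexNonneg (g - f) ↔ toColex f ≤ toColex g := by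
  refine ⟨fun h => not_lt.1 fun ⟨k, hk, hlt⟩ => ?_, fun h k hk => ?_⟩
  · exact hlt.not_ge (sub_nonneg.1 (h k fun l hl => sub_eq_zero.2 (hk l hl)))
  · exact sub_nonneg.2 (Pi.apply_le_of_toColex h fun l hl => (sub_eq_zero.1 (hk l hl)).symm)

variable {K : Type*} [Field K] [LinearOrder K] [IsStrictOrderedRing K]

theorem exists_forall_pos_add_mul {ι : Type*} [Finite ι] (a b : ι → K) :
    ∃ t, ∀ j, 0 < b j → 0 < a j + t * b j := by
  obtain ⟨M, hM⟩ := Finite.exists_le fun j => -a j / b j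
  refine ⟨M + 1, fun j hj => ?_⟩
  have hlt : -a j / b j < M + 1 := (hM j).trans_lt (lt_add_one M)
  linarith [(div_lt_iff₀ hj).1 hlt]

-- The alternative is what the downward induction on `k` needs: a positive value stays positive when
-- the old vector is scaled by a large `t`, and otherwise the `k`-th entry of `f j` decides.
theorem exists_hasLeadingOneAt_forall_pos_or_eq_zero {ι : Type*} [Finite ι]
    {f : ι → Fin (n + 1) → K} (hf : ∀ j, ColexNonneg (f j)) (k : Fin (n + 1)) :
    ∃ x, HasLeadingOneAt k x ∧ ∀ j, 0 < f j ⬝ᵥ x ∨ ∀ l, k ≤ l → f j l = 0 := by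
  induction k using Fin.reverseInduction with
  | last =>
    refine ⟨Pi.single (Fin.last n) 1, ⟨by simp, fun j hj => by simp [hj.ne]⟩, fun j => ?_⟩
    simpa [Fin.last_le_iff, eq_comm] using (hf j).last_nonneg.lt_or_eq
  | cast k ih =>
    obtain ⟨y, hy, hpos⟩ := ih
    obtain ⟨t, ht⟩ := exists_forall_pos_add_mul (fun j => f j k.castSucc) (fun j => f j ⬝ᵥ y)
    have hdot (j : ι) :
        f j ⬝ᵥ (Pi.single k.castSucc 1 + t • y) = f j k.castSucc + t * f j ⬝ᵥ y := by
      simp [dotProduct_add]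
    refine ⟨Pi.single k.castSucc 1 + t • y, ⟨?_, fun l hl => ?_⟩, fun j => ?_⟩
    · simp [hy.2 _ k.castSucc_lt_succ]
    · simp [hl.ne, hy.2 l (hl.trans k.castSucc_lt_succ)]
    · rw [hdot]
      rcases hpos j with hj | hj
      · exact .inl (ht j hj)
      · have hzero (l) (hl : k.castSucc < l) : f j l = 0 := hj l (Fin.castSucc_lt_iff_succ_le.1 hl)
        have hyj : f j ⬝ᵥ y = 0 := by rw [hy.dotProduct_eq fun l hl => hj l hl.le, hj _ le_rfl]
        rw [hyj, mul_zero, add_zero]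
        refine (hf j _ hzero).lt_or_eq.imp_right fun hk l hl => ?_
        rcases hl.eq_or_lt with rfl | hlt
        exacts [hk.symm, hzero l hlt]

theorem exists_hasLeadingOneAt_forall_dotProduct_nonneg {ι : Type*} [Finite ι]
    {f : ι → Fin n → K} (hf : ∀ j, ColexNonneg (f j)) (k : Fin n) :
    ∃ x, HasLeadingOneAt k x ∧ ∀ j, 0 ≤ f j ⬝ᵥ x := by
  cases n with
  | zero => exact k.elim0
  | succ n =>
    obtain ⟨x, hx, hpos⟩ := exists_hasLeadingOneAt_forall_pos_or_eq_zero hf k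
    refine ⟨x, hx, fun j => (hpos j).elim le_of_lt fun hj => ?_⟩
    rw [hx.dotProduct_eq fun l hl => hj l hl.le, hj k le_rfl]

end ColexNonneg

section PositiveFamily

variable {ι : Type*} [Fintype ι]

/-- Coordinatewise form, over any ordered field, of `IsPositiveCone` for the cone generated by a
finite family. -/
def PositiveFamily {K : Type*} [Semiring K] [LE K] {n : ℕ} (u : ι → Fin n → K) : Prop :=
  ∀ k, ∃ c : ι → K, (∀ i, 0 ≤ c i) ∧ HasLeadingOneAt k (∑ i, c i • u i)

/-- The family obtained from `u` by omitting its `i`-th member and dropping the last coordinate of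
the others. -/
def initOmitting {ι K : Type*} {n : ℕ} (u : ι → Fin (n + 1) → K) (i : ι) :
    {j // j ≠ i} → Fin n → K :=
  fun j => Fin.init (u j)

variable {n : ℕ}

theorem positiveFamily_comp_equiv_iff {κ K : Type*} [Fintype κ] [Semiring K] [LE K]
    {u : ι → Fin n → K} (e : κ ≃ ι) :
    PositiveFamily (u ∘ e) ↔ PositiveFamily u := by
  refine forall_congr' fun k => (e.arrowCongr (.refl K)).exists_congr fun c => ?_
  simp [e.forall_congr_left, ← e.sum_comp]

theorem PositiveFamily.eq_zero_of_forall_dotProduct_eq_zero {K : Type*} [CommSemiring K] [LE K]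
    {u : ι → Fin n → K}
    (hu : PositiveFamily u) {f : Fin n → K} (hf : ∀ i, f ⬝ᵥ u i = 0) : f = 0 := by
  ext k
  induction k using WellFoundedGT.induction with
  | ind k ih =>
    obtain ⟨c, -, hx⟩ := hu k
    rw [← hx.dotProduct_eq ih, dotProduct_sum]
    simp [hf]

theorem positiveFamily_iff_forall_colexNonneg {K : Type*} [Field K] [LinearOrder K]
    [IsStrictOrderedRing K] {u d : ι → Fin n → K} (hd : IsDualFamily u d)
    (hcard : Fintype.card ι = n) : PositiveFamily u ↔ ∀ i, ColexNonneg (d i) := by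
  refine ⟨fun hu i k hk => ?_, fun h k => ?_⟩
  · obtain ⟨c, hc, hx⟩ := hu k
    rw [← hx.dotProduct_eq hk, hd.dotProduct_sum_smul]
    exact hc i
  · obtain ⟨x, hx, hpos⟩ := exists_hasLeadingOneAt_forall_dotProduct_nonneg h k
    refine ⟨fun i => d i ⬝ᵥ x, hpos, ?_⟩
    rwa [hd.sum_dotProduct_smul (by simpa using hcard)]

end PositiveFamily

section Elimination

variable {ι K : Type*} [Field K] {n : ℕ}

/-- The vector `d j` with its last entry cleared by a multiple of `d i`, as in Gaussian
elimination; meaningful only if the last entry of `d i` is nonzero. -/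
def clearLast (d : ι → Fin (n + 1) → K) (i j : ι) : Fin (n + 1) → K :=
  d j - (d j (Fin.last n) / d i (Fin.last n)) • d i

/-- The multiple of `f` with last entry `1`; it is `0` if the last entry of `f` is `0`. -/
def normalizeLast (f : Fin (n + 1) → K) : Fin (n + 1) → K :=
  (f (Fin.last n))⁻¹ • f

variable {d : ι → Fin (n + 1) → K} {i : ι}

theorem clearLast_apply_last (hi : d i (Fin.last n) ≠ 0) (j : ι) :
    clearLast d i j (Fin.last n) = 0 := by
  simp [clearLast, hi]

theorem clearLast_eq_smul_sub {j : ι} (hj : d j (Fin.last n) ≠ 0) :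
    clearLast d i j = d j (Fin.last n) • (normalizeLast (d j) - normalizeLast (d i)) := by
  rw [clearLast, normalizeLast, normalizeLast, smul_sub, smul_inv_smul₀ hj, smul_smul,
    div_eq_mul_inv]

theorem IsDualFamily.init_clearLast {u : ι → Fin (n + 1) → K} (hd : IsDualFamily u d)
    (hi : d i (Fin.last n) ≠ 0) :
    IsDualFamily (initOmitting u i) fun j => Fin.init (clearLast d i j) := by
  have hdot (j k : {j // j ≠ i}) :
      (Fin.init (clearLast d i j) : Fin n → K) ⬝ᵥ initOmitting u i k = d j ⬝ᵥ u k := by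
    have hsplit := dotProduct_eq_init_add (clearLast d i j) (u k)
    rw [clearLast_apply_last hi, zero_mul, add_zero] at hsplit
    rw [initOmitting, ← hsplit, clearLast, sub_dotProduct, smul_dotProduct,
      hd.dotProduct_of_ne k.2.symm, smul_zero, sub_zero]
  refine ⟨fun j => ?_, fun {j k} hjk => ?_⟩
  · rw [hdot, hd.dotProduct_self]
  · rw [hdot, hd.dotProduct_of_ne (Subtype.coe_injective.ne hjk)]

theorem IsDualFamily.injOn_normalizeLast {u : ι → Fin (n + 1) → K} (hd : IsDualFamily u d) :
    Set.InjOn (fun j => normalizeLast (d j)) {j | d j (Fin.last n) ≠ 0} := by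
  intro i hi j _ hij
  by_contra hne
  have h := congrArg (· ⬝ᵥ u i) hij
  simp only [normalizeLast, smul_dotProduct, hd.dotProduct_self,
    hd.dotProduct_of_ne (Ne.symm hne), smul_eq_mul, mul_one, mul_zero] at h
  exact inv_ne_zero hi h

theorem IsDualFamily.last_ne_zero_of_positiveFamily_initOmitting [Fintype ι]
    [DecidableEq ι] [LE K] {u : ι → Fin (n + 1) → K} (hd : IsDualFamily u d)
    (hi : PositiveFamily (initOmitting u i)) : d i (Fin.last n) ≠ 0 := by
  intro hlast
  have hinit (x) : d i ⬝ᵥ x = (Fin.init (d i) : Fin n → K) ⬝ᵥ Fin.init x := by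
    rw [dotProduct_eq_init_add, hlast, zero_mul, add_zero]
  have hzero : (Fin.init (d i) : Fin n → K) = 0 :=
    hi.eq_zero_of_forall_dotProduct_eq_zero fun j =>
      (hinit (u j)).symm.trans (hd.dotProduct_of_ne j.2.symm)
  simpa [hinit, hzero] using hd.dotProduct_self i

variable [LinearOrder K] [IsStrictOrderedRing K]

theorem colexNonneg_clearLast_iff {j : ι} (hj : 0 < d j (Fin.last n)) :
    ColexNonneg (clearLast d i j) ↔
      toColex (normalizeLast (d i)) ≤ toColex (normalizeLast (d j)) := by
  rw [clearLast_eq_smul_sub hj.ne', colexNonneg_smul_iff hj, colexNonneg_sub_iff]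

variable [Fintype ι] [DecidableEq ι] {u : ι → Fin (n + 1) → K}

theorem positiveFamily_initOmitting_iff (hu : PositiveFamily u) (hd : IsDualFamily u d)
    (hcard : Fintype.card ι = n + 1) :
    PositiveFamily (initOmitting u i) ↔ d i (Fin.last n) ≠ 0 ∧
      ∀ j, d j (Fin.last n) ≠ 0 →
        toColex (normalizeLast (d i)) ≤ toColex (normalizeLast (d j)) := by
  have hdcolex := (positiveFamily_iff_forall_colexNonneg hd hcard).1 hu
  have hcrit (hi : d i (Fin.last n) ≠ 0) :
      PositiveFamily (initOmitting u i) ↔ ∀ j ≠ i, ColexNonneg (clearLast d i j) := by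
    rw [positiveFamily_iff_forall_colexNonneg (hd.init_clearLast hi) (by simp [hcard])]
    simp [colexNonneg_init_iff (clearLast_apply_last hi _)]
  refine ⟨fun h => ?_, fun ⟨hi, hmin⟩ => (hcrit hi).2 fun j _ => ?_⟩
  · have hi := hd.last_ne_zero_of_positiveFamily_initOmitting h
    refine ⟨hi, fun j hj => ?_⟩
    rcases eq_or_ne j i with rfl | hji
    · exact le_rfl
    · have hpos := (hdcolex j).last_nonneg.lt_of_ne' hj
      exact (colexNonneg_clearLast_iff hpos).1 ((hcrit hi).1 h j hji)
  · rcases (hdcolex j).last_nonneg.eq_or_lt with hj | hj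
    · simpa [clearLast, ← hj] using hdcolex j
    · exact (colexNonneg_clearLast_iff hj).2 (hmin j hj.ne')

theorem PositiveFamily.existsUnique_initOmitting (hu : PositiveFamily u)
    (hcard : Fintype.card ι = n + 1) : ∃! i, PositiveFamily (initOmitting u i) := by
  obtain ⟨d, hd⟩ := exists_isDualFamily_of_forall_dotProduct_eq_zero (by simpa using hcard)
    fun _ => hu.eq_zero_of_forall_dotProduct_eq_zero
  have hne : {j | d j (Fin.last n) ≠ 0}.Nonempty := by
    by_contra! hempty
    have hlast (j : ι) : d j (Fin.last n) = 0 := by simpa using Set.ext_iff.1 hempty j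
    have h := hd.sum_dotProduct_smul (by simpa using hcard) (Pi.single (Fin.last n) 1)
    simpa [hlast] using congrFun h (Fin.last n)
  obtain ⟨i, hi, hmin⟩ := Set.exists_min_image _ (fun j => toColex (normalizeLast (d j)))
    (Set.toFinite _) hne
  refine ⟨i, (positiveFamily_initOmitting_iff hu hd hcard).2 ⟨hi, hmin⟩, fun j hj => ?_⟩
  obtain ⟨hj, hjmin⟩ := (positiveFamily_initOmitting_iff hu hd hcard).1 hj
  exact hd.injOn_normalizeLast hj hi (toColex.injective (le_antisymm (hjmin i hi) (hmin j hj)))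

end Elimination

section OrderedFamily

/-- Coordinatewise form of `PositivelyOrdered`, over any ordered field. -/
def OrderedFamily {K : Type*} [Semiring K] [LE K] {n : ℕ} (v : Fin n → Fin n → K) : Prop :=
  ∀ k, ∃ c : Fin n → K, (∀ i, 0 ≤ c i) ∧ (∀ i, k < i → c i = 0) ∧
    HasLeadingOneAt k (∑ i, c i • v i)

variable {K : Type*} [Semiring K] {n : ℕ}

theorem OrderedFamily.positiveFamily [LE K] {v : Fin n → Fin n → K} (hv : OrderedFamily v) :
    PositiveFamily v := fun k =>
  let ⟨c, hc, _, hx⟩ := hv k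
  ⟨c, hc, hx⟩

theorem orderedFamily_succ_iff [Preorder K] {v : Fin (n + 1) → Fin (n + 1) → K} :
    OrderedFamily v ↔
      OrderedFamily (fun k : Fin n => (Fin.init (v k.castSucc) : Fin n → K)) ∧
        PositiveFamily v := by
  have hlead (k : Fin n) {c : Fin (n + 1) → K} (hc : c (Fin.last n) = 0) :
      HasLeadingOneAt k.castSucc (∑ i, c i • v i) ↔
        HasLeadingOneAt k (∑ i : Fin n, c i.castSucc • (Fin.init (v i.castSucc) : Fin n → K)) := by
    rw [hasLeadingOneAt_castSucc_iff, init_sum_smul, Fin.sum_univ_castSucc, hc, zero_smul, add_zero]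
  refine ⟨fun h => ⟨fun k => ?_, h.positiveFamily⟩, fun ⟨h, hpos⟩ k => ?_⟩
  · obtain ⟨c, hc, hck, hx⟩ := h k.castSucc
    exact ⟨fun i => c i.castSucc, fun i => hc _,
      fun i hi => hck _ (Fin.castSucc_lt_castSucc_iff.2 hi),
      (hlead k (hck _ k.castSucc_lt_last)).1 hx⟩
  · induction k using Fin.lastCases with
    | last =>
      obtain ⟨c, hc, hx⟩ := hpos (Fin.last n)
      exact ⟨c, hc, fun i hi => absurd hi (Fin.le_last i).not_gt, hx⟩
    | cast k =>
      obtain ⟨c, hc, hck, hx⟩ := h k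
      refine ⟨Fin.snoc (α := fun _ => K) c 0, ?_, ?_, (hlead k (by simp)).2 (by simpa using hx)⟩
      · simpa [Fin.forall_fin_succ'] using hc
      · simpa [Fin.forall_fin_succ'] using hck

variable {ι : Type*} [DecidableEq ι]

/-- An enumeration of `ι` ending with `i` amounts to an enumeration of the elements other
than `i`. -/
def enumerationOmittingLast (i : ι) :
    {w : Fin (n + 1) ≃ ι // w (Fin.last n) = i} ≃ (Fin n ≃ {j // j ≠ i}) :=
  ((finSuccEquivLast.equivCongr (.refl ι)).subtypeEquiv fun w => by simp).trans
    (Equiv.optionSubtype i)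

theorem coe_enumerationOmittingLast_apply (i : ι)
    (w : {w : Fin (n + 1) ≃ ι // w (Fin.last n) = i}) (k : Fin n) :
    (enumerationOmittingLast i w k : ι) = w.1 k.castSucc := by
  simp [enumerationOmittingLast]

variable [Preorder K] [Fintype ι] {u : ι → Fin (n + 1) → K}

theorem PositiveFamily.orderedFamily_comp_iff (hu : PositiveFamily u) {i : ι}
    (w : {w : Fin (n + 1) ≃ ι // w (Fin.last n) = i}) :
    OrderedFamily (u ∘ w.1) ↔ OrderedFamily (initOmitting u i ∘ enumerationOmittingLast i w) := by
  rw [orderedFamily_succ_iff, positiveFamily_comp_equiv_iff, and_iff_left hu]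
  simp only [Function.comp_def, initOmitting, coe_enumerationOmittingLast_apply]

theorem OrderedFamily.positiveFamily_initOmitting_last {w : Fin (n + 1) ≃ ι}
    (hw : OrderedFamily (u ∘ w)) : PositiveFamily (initOmitting u (w (Fin.last n))) := by
  have hu : PositiveFamily u := (positiveFamily_comp_equiv_iff w).1 hw.positiveFamily
  exact (positiveFamily_comp_equiv_iff _).1
    ((hu.orderedFamily_comp_iff ⟨w, rfl⟩).1 hw).positiveFamily

end OrderedFamily

theorem existsUnique_perm_positivelyOrdered_general {ι K : Type*} [Fintype ι] [Field K]
    [LinearOrder K] [IsStrictOrderedRing K] {n : ℕ} (hcard : Fintype.card ι = n)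
    {u : ι → Fin n → K} (hu : PositiveFamily u) :
    ∃! w : Fin n ≃ ι, OrderedFamily (u ∘ w) := by
  classical
  induction n generalizing ι with
  | zero =>
    have : IsEmpty ι := Fintype.card_eq_zero_iff.1 hcard
    exact ⟨Equiv.equivOfIsEmpty _ _, fun k => k.elim0, fun w _ => Subsingleton.elim _ _⟩
  | succ n ih =>
    obtain ⟨i, hi, hi_unique⟩ := hu.existsUnique_initOmitting hcard
    obtain ⟨w, hw, hw_unique⟩ := ih (by simp [hcard]) hi
    refine ⟨((enumerationOmittingLast i).symm w).1, ?_, fun w' hw' => ?_⟩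
    · exact (hu.orderedFamily_comp_iff _).2 (by rwa [Equiv.apply_symm_apply])
    · have hlast : w' (Fin.last n) = i := hi_unique _ hw'.positiveFamily_initOmitting_last
      have hrest : enumerationOmittingLast i ⟨w', hlast⟩ = w :=
        hw_unique _ ((hu.orderedFamily_comp_iff ⟨w', hlast⟩).1 hw')
      rw [← hrest, Equiv.symm_apply_apply]

section Coordinates

variable {n : ℕ}

theorem prProj_succ_eq_lastUnit_iff (k : Fin n) (x : Fin n → ℝ) :
    prProj (k + 1) k.isLt x = lastUnit (k + 1) ↔ HasLeadingOneAt k x := by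
  rw [funext_iff, Fin.forall_fin_succ', and_comm]
  refine and_congr (by simp [prProj, lastUnit, Fin.castLE]) ⟨fun h j hj => ?_, fun h j => ?_⟩
  · simpa [prProj, lastUnit, (Fin.lt_def.1 hj).ne] using h ⟨j, hj⟩
  · simpa [prProj, lastUnit, j.isLt.ne] using h (j.castLE k.isLt.le) j.isLt

theorem prProj_prProj {l k : ℕ} (hlk : l ≤ k) (hk : k ≤ n) (x : Fin n → ℝ) :
    prProj l hlk (prProj k hk x) = prProj l (hlk.trans hk) x :=
  rfl

theorem prProj_sum_smul {ι : Type*} [Fintype ι] (k : ℕ) (hk : k ≤ n) (c : ι → ℝ)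
    (v : ι → Fin n → ℝ) : prProj k hk (∑ i, c i • v i) = ∑ i, c i • prProj k hk (v i) := by
  ext j
  simp [prProj]

theorem IsPositiveCone.positiveFamily {u : Fin n → Fin n → ℝ}
    (h : IsPositiveCone {x | ∃ c : Fin n → ℝ, (∀ i, 0 ≤ c i) ∧ x = ∑ i, c i • u i}) :
    PositiveFamily u := by
  intro k
  obtain ⟨_, ⟨c, hc, rfl⟩, hx⟩ := h (k + 1) (by lia) k.isLt
  exact ⟨c, hc, (prProj_succ_eq_lastUnit_iff k _).1 hx⟩

theorem positivelyOrdered_iff_orderedFamily {v : Fin n → Fin n → ℝ} :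
    PositivelyOrdered v ↔ OrderedFamily v := by
  refine ⟨fun h k => ?_, fun h k _ hk l hl hlk => ?_⟩
  · obtain ⟨_, ⟨c, hc, hck, rfl⟩, hx⟩ := h (k + 1) (by lia) k.isLt (k + 1) (by lia) le_rfl
    rw [← prProj_sum_smul] at hx
    exact ⟨c, hc, fun i hi => hck i (by lia), (prProj_succ_eq_lastUnit_iff k _).1 hx⟩
  · obtain ⟨l, rfl⟩ := Nat.exists_eq_add_of_le' hl
    obtain ⟨c, hc, hcl, hx⟩ := h ⟨l, by lia⟩
    refine ⟨_, ⟨c, hc, fun i hi => hcl i (Fin.lt_def.2 (by grind)), rfl⟩, ?_⟩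
    rw [← prProj_sum_smul, prProj_prProj]
    exact (prProj_succ_eq_lastUnit_iff ⟨l, _⟩ _).2 hx

end Coordinates

/-- If `u₁,…,u_s ∈ ℝ^s` are linearly independent and generate a positive cone,
then there is a unique permutation `w` of `{1,…,s}` such that
`(u_{w(1)},…,u_{w(s)})` is positively ordered. -/
theorem existsUnique_perm_positivelyOrdered {s : ℕ}
    (u : Fin s → (Fin s → ℝ)) (hu : LinearIndependent ℝ u)
    (C : Set (Fin s → ℝ))
    (hC : C = {x | ∃ lam : Fin s → ℝ, (∀ i, 0 ≤ lam i) ∧ x = ∑ i, lam i • u i})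
    (hpos : IsPositiveCone C) :
    ∃! w : Equiv.Perm (Fin s), PositivelyOrdered (fun j => u (w j)) := by
  simp only [positivelyOrdered_iff_orderedFamily]
  exact existsUnique_perm_positivelyOrdered_general (Fintype.card_fin s) (hC ▸ hpos).positiveFamily

end
end

section
/- Let s ≥ 2, let u₁,…,u_s ∈ ℝ^s be linearly independent generating the full-dimensional simplicial cone C := {Σ λ_j u_j : λ_j ≥ 0}, and fix k with 1 < k ≤ s. Assume (0,…,0,1) ∈ pr_j(C) ⊆ ℝ^j for every j with k < j ≤ s. For a permutation w of {1,…,s}, say the tuple (u_{w(1)},…,u_{w(s)}) is k-WPO if (a) the (s−1)-tuple obtained by deleting the k-th entry and then applying to each remaining vector the projection ℝ^s → ℝ^{s−1} that deletes the k-th coordinate is positively ordered, and (b) u_{w(k)} ∉ C^{(k)}, where C^{(k)} is the smallest face of C containing C ∩ ker(pr_k). Let λ := Σ_w det(A_w), the sum over all permutations w for which (u_{w(1)},…,u_{w(s)}) is k-WPO, where A_w is the s × s matrix with columns u_{w(1)},…,u_{w(s)}. Then λ ≠ 0 if and only if there is exactly one permutation w such that (u_{w(1)},…,u_{w(s)})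 is k-WPO. Moreover, the following are equivalent: (1) λ > 0; (2) λ ≠ 0 and (0,…,0,1) ∈ pr_k(C); (3) λ ≠ 0 and (0,…,0,−1) ∉ pr_k(C); (4) C is positive and (0,…,0,−1) ∉ pr_k(C). -/
/-!
Let `A` have the columns `u_i` and let `B` be its inverse, so that `C` is cut out by the rows of
`B`. Restrict the inequalities whose facets contain `C^{(k)}` to a line parallel to the `k`-th axis
whose other coordinates are positive, each infinitely larger than the preceding ones. They become
`0 ≤ r i + c i • t`, where `c` is the `k`-th column of `B` and `r i` is its `i`-th row without the
`k`-th entry, with the sign of its last nonzero entry. The solutions `t` form an interval, possibly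
empty or unbounded.

The `k`-WPO permutations `w` correspond to the endpoints of this interval, `w k` being the
inequality that cuts out the endpoint. A Schur complement turns the other inequalities at this
endpoint into the positivity of the rows dual to the remaining vectors, and then exactly one
arrangement of these vectors is positively ordered, as one sees by splitting off its last vector in
the same way. By Cramer's rule `det A_w` has the sign of `c (w k)`, which is positive at a left and
negative at a right endpoint. As all `|det A_w|` are equal, `λ` is a positive multiple of the number
of left endpoints minus the number of right ones: it is nonzero if and only if the interval is a
half-line, and positive if and only if this half-line is unbounded above. The sign of `c` also
decides whether `(0,…,0,±1) ∈ pr_k(C)`.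
-/

noncomputable section

open scoped Classical

/-- The index embedding `Fin (s-1) → Fin s` skipping the `k`-th position
(1-based), i.e. the 0-based index `k-1`. -/
def skipIdx (s k : ℕ) (j : Fin (s - 1)) : Fin s :=
  if _ : (j : ℕ) < k - 1 then ⟨(j : ℕ), by have := j.isLt; omega⟩
  else ⟨(j : ℕ) + 1, by have := j.isLt; omega⟩

section Colex

instance {K E : Type*} [Semiring K] [AddCommMonoid E] [Module K E] : Module K (Colex E) :=
  inferInstanceAs <| Module K E

section OrderInstances

variable {ι E : Type*} [LinearOrder ι] [WellFoundedGT ι] [AddCommGroup E] [LinearOrder E]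

-- The linear order is named because it does not unfold, at instance transparency, to the partial
-- order that instance search would choose.
instance [IsOrderedAddMonoid E] :
    @IsOrderedAddMonoid (Colex (ι → E)) _ Pi.Colex.linearOrder.toPartialOrder.toPreorder where
  add_le_add_left _ _ hxy z :=
    hxy.elim (fun hxyz => hxyz ▸ le_rfl) fun ⟨i, hi⟩ =>
      .inr ⟨i, fun j hj => congrArg (· + z j) (hi.1 j hj), add_lt_add_left hi.2 (z i)⟩

instance {K : Type*} [Semiring K] [PartialOrder K] [Module K E] [PosSMulStrictMono K E] :
    @PosSMulStrictMono K (Colex (ι → E)) _ _ Pi.Colex.linearOrder.toPartialOrder.toPreorder _ where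
  smul_lt_smul_of_pos_left c hc _ _ := fun ⟨i, hi⟩ =>
    ⟨i, fun j hj => congrArg (c • ·) (hi.1 j hj), smul_lt_smul_of_pos_left hi.2 hc⟩

end OrderInstances

variable {K : Type*} [Zero K] {m : ℕ}

theorem exists_last_ne_zero {f : Fin m → K} {j : Fin m} (hj : f j ≠ 0) :
    ∃ l ≥ j, f l ≠ 0 ∧ ∀ l' > l, f l' = 0 := by
  obtain ⟨l, hjl, hl⟩ := (Set.toFinite {l | f l ≠ 0}).exists_le_maximal hj
  exact ⟨l, hjl, hl.prop, fun l' hl' => not_not.1 fun h => hl.not_prop_of_gt hl' h⟩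

variable [LinearOrder K]

theorem toColex_pos_of_last_pos {f : Fin m → K} {j : Fin m} (hj : 0 < f j)
    (hlast : ∀ l > j, f l = 0) : 0 < toColex f :=
  ⟨j, fun l hl => (hlast l hl).symm, hj⟩

theorem toColex_nonneg_of_forall_last {f : Fin m → K}
    (h : ∀ j, (∀ l > j, f l = 0) → 0 ≤ f j) : 0 ≤ toColex f :=
  not_lt.1 fun ⟨j, hlast, hj⟩ => (h j hlast).not_gt hj

theorem apply_last_nonneg_of_toColex_nonneg {f : Fin (m + 1) → K} (hf : 0 ≤ toColex f) :
    0 ≤ f (Fin.last m) :=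
  Pi.apply_le_of_toColex hf fun l hl => absurd hl (Fin.le_last l).not_gt

theorem toColex_removeNth_nonneg {f : Fin (m + 1) → K} {κ : Fin (m + 1)} (hf : 0 ≤ toColex f)
    (hκ : f κ = 0) : 0 ≤ toColex (κ.removeNth f) := by
  refine toColex_nonneg_of_forall_last fun j hj => Pi.apply_le_of_toColex hf fun l hl => ?_
  induction l using κ.succAboveCases with
  | x => exact hκ.symm
  | p l => exact (hj l ((Fin.strictMono_succAbove κ).lt_iff_lt.1 hl)).symm

end Colex

section Endpoints

variable {ι K V : Type*} [Field K] [AddCommGroup V] [Module K V] {c : ι → K} {r : ι → V} {i j : ι}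

/-- The zero of the affine function `t ↦ r i + c i • t` (the junk value `0` if `c i = 0`). -/
def affineRoot (c : ι → K) (r : ι → V) (i : ι) : V :=
  -((c i)⁻¹ • r i)

theorem add_smul_eq_smul_sub_affineRoot (hi : c i ≠ 0) (t : V) :
    r i + c i • t = c i • (t - affineRoot c r i) := by
  rw [affineRoot, sub_neg_eq_add, smul_add, smul_inv_smul₀ hi, add_comm]

theorem affineRoot_neg : affineRoot (-c) r i = -affineRoot c r i := by
  simp [affineRoot, inv_neg]

variable [LinearOrder V]

/-- The interval of solutions `t` of the affine inequalities `0 ≤ r i + c i • t`. -/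
def feasibleSet (c : ι → K) (r : ι → V) : Set V :=
  {t | ∀ i, 0 ≤ r i + c i • t}

/-- The `i`-th inequality cuts out an endpoint of `feasibleSet c r`, at which all the other
inequalities are strict; it is the left endpoint if `0 < c i` and the right one if `c i < 0`. -/
def IsEndpoint (c : ι → K) (r : ι → V) (i : ι) : Prop :=
  c i ≠ 0 ∧ ∀ j ≠ i, 0 < r j + c j • affineRoot c r i

theorem isEndpoint_neg : IsEndpoint (-c) r i ↔ IsEndpoint c r i := by
  simp [IsEndpoint, affineRoot_neg]

theorem feasibleSet_neg : feasibleSet (-c) r = -feasibleSet c r := by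
  ext t
  simp [feasibleSet]

theorem IsEndpoint.affineRoot_mem (hi : IsEndpoint c r i) : affineRoot c r i ∈ feasibleSet c r := by
  intro j
  rcases eq_or_ne j i with rfl | hj
  · rw [add_smul_eq_smul_sub_affineRoot hi.1, sub_self, smul_zero]
  · exact (hi.2 j hj).le

variable [LinearOrder K] [IsOrderedAddMonoid V] [PosSMulStrictMono K V]

theorem add_smul_pos_iff (hi : 0 < c i) {t : V} : 0 < r i + c i • t ↔ affineRoot c r i < t := by
  rw [add_smul_eq_smul_sub_affineRoot hi.ne', smul_pos_iff_of_pos_left hi, sub_pos]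

theorem add_smul_nonneg_iff (hi : 0 < c i) {t : V} : 0 ≤ r i + c i • t ↔ affineRoot c r i ≤ t := by
  rw [add_smul_eq_smul_sub_affineRoot hi.ne', smul_nonneg_iff_nonneg_of_pos_left hi, sub_nonneg]

theorem IsEndpoint.eq_of_pos (hi : IsEndpoint c r i) (hj : IsEndpoint c r j) (hci : 0 < c i)
    (hcj : 0 < c j) : i = j := by
  by_contra hij
  exact ((add_smul_pos_iff hcj).1 (hi.2 j (Ne.symm hij))).not_gt
    ((add_smul_pos_iff hci).1 (hj.2 i hij))

theorem feasibleSet_nonempty_of_nonneg [Finite ι] (hc : ∀ i, 0 ≤ c i)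
    (hr : ∀ i, c i = 0 → 0 ≤ r i) : (feasibleSet c r).Nonempty := by
  obtain ⟨t, ht⟩ := (Set.finite_range (affineRoot c r)).bddAbove
  refine ⟨t, fun i => ?_⟩
  rcases (hc i).eq_or_lt with h0 | hpos
  · simpa [← h0] using hr i h0.symm
  · exact (add_smul_nonneg_iff hpos).2 (ht ⟨i, rfl⟩)

variable [IsStrictOrderedRing K]

theorem IsEndpoint.eq_of_mul_pos (hi : IsEndpoint c r i) (hj : IsEndpoint c r j)
    (hij : 0 < c i * c j) : i = j := by
  rcases mul_pos_iff.1 hij with ⟨hci, hcj⟩ | ⟨hci, hcj⟩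
  · exact hi.eq_of_pos hj hci hcj
  · exact (isEndpoint_neg.2 hi).eq_of_pos (isEndpoint_neg.2 hj) (neg_pos.2 hci) (neg_pos.2 hcj)

variable [Finite ι] (hgen : ∀ i j, c i ≠ 0 → j ≠ i → r j + c j • affineRoot c r i ≠ 0)

include hgen

theorem exists_isEndpoint_pos (hfeas : (feasibleSet c r).Nonempty) (hpos : ∃ i, 0 < c i) :
    ∃ i, IsEndpoint c r i ∧ 0 < c i := by
  obtain ⟨t, ht⟩ := hfeas
  obtain ⟨i, hi, hmax⟩ := (Set.toFinite {i | 0 < c i}).exists_maximalFor (affineRoot c r) _ hpos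
  refine ⟨i, ⟨hi.ne', fun j hji => (hgen i j hi.ne' hji).symm.lt_of_le ?_⟩, hi⟩
  rcases lt_or_ge 0 (c j) with hj | hj
  · exact (add_smul_nonneg_iff hj).2 (not_lt.1 fun h => (hmax hj h.le).not_gt h)
  · have hit : affineRoot c r i ≤ t := (add_smul_nonneg_iff hi).1 (ht i)
    exact (ht j).trans (add_le_add_right (smul_le_smul_of_nonpos_left hit hj) _)

theorem exists_isEndpoint_pos_iff :
    (∃ i, IsEndpoint c r i ∧ 0 < c i) ↔ (feasibleSet c r).Nonempty ∧ ∃ i, 0 < c i :=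
  ⟨fun ⟨i, hi, hpos⟩ => ⟨⟨_, hi.affineRoot_mem⟩, i, hpos⟩,
    fun h => exists_isEndpoint_pos hgen h.1 h.2⟩

theorem exists_isEndpoint_neg_iff :
    (∃ i, IsEndpoint c r i ∧ c i < 0) ↔ (feasibleSet c r).Nonempty ∧ ∃ i, c i < 0 := by
  have := exists_isEndpoint_pos_iff (c := -c) (r := r) (by simpa [affineRoot_neg] using hgen)
  simpa [isEndpoint_neg, feasibleSet_neg] using this

end Endpoints

section FlagPositive

open Matrix

variable {ι K : Type*} [Field K] {m : ℕ}

theorem dotProduct_eq_of_last {f x : Fin m → K} {j : Fin m} {σ : K} (hf : ∀ l > j, f l = 0)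
    (hx : ∀ l ≤ j, x l = (Pi.single j σ : Fin m → K) l) : f ⬝ᵥ x = f j * σ := by
  rw [← dotProduct_single]
  refine Finset.sum_congr rfl fun l _ => ?_
  rcases le_or_gt l j with hl | hl
  · rw [hx l hl]
  · rw [hf l hl, zero_mul, zero_mul]

section LeftInverse

variable [DecidableEq ι] {n : Type*} [Fintype n] {A : Matrix n ι K} {B : Matrix ι n K}

theorem vecMul_eq_single_of_mul_eq_one (hBA : B * A = 1) (i : ι) : B i ᵥ* A = Pi.single i 1 := by
  ext x
  rw [← mul_apply_eq_vecMul, hBA, one_eq_pi_single]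

theorem row_ne_zero_of_mul_eq_one (hBA : B * A = 1) (i : ι) : B i ≠ 0 := fun hi => by
  simpa [hi] using congrFun (vecMul_eq_single_of_mul_eq_one hBA i) i

theorem vecMul_nonneg_of_mul_eq_one [LinearOrder K] [IsStrictOrderedRing K] (hBA : B * A = 1)
    (i : ι) : 0 ≤ B i ᵥ* A := by
  rw [vecMul_eq_single_of_mul_eq_one hBA]
  exact Pi.single_nonneg.2 zero_le_one

end LeftInverse

variable [Fintype ι] [LinearOrder K]

/-- `(0, …, 0, σ) ∈ pr_{j+1} C`, where `C` is the cone generated by the columns of `A`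
(coordinates are indexed from `0`). -/
def ReachesAxis (A : Matrix (Fin m) ι K) (j : Fin m) (σ : K) : Prop :=
  ∃ a, 0 ≤ a ∧ ∀ l ≤ j, (A *ᵥ a) l = (Pi.single j σ : Fin m → K) l

/-- The tuple of columns of `V` is positively ordered. It suffices to ask, for every `j`, that the
first `j + 1` columns reach the `j`-th axis: for `i < j` the first `i + 1` of them reach the
`i`-th one. -/
def IsFlagPositive (V : Matrix (Fin m) (Fin m) K) : Prop :=
  ∀ j, ∃ a, 0 ≤ a ∧ (∀ i > j, a i = 0) ∧ ∀ l ≤ j, (V *ᵥ a) l = (Pi.single j 1 : Fin m → K) l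

theorem IsFlagPositive.reachesAxis {V : Matrix (Fin m) (Fin m) K} (hV : IsFlagPositive V)
    (j : Fin m) : ReachesAxis V j 1 :=
  let ⟨a, ha, _, hx⟩ := hV j
  ⟨a, ha, hx⟩

theorem isFlagPositive_succ_iff {V : Matrix (Fin (m + 1)) (Fin (m + 1)) K} :
    IsFlagPositive V ↔
      IsFlagPositive (V.submatrix Fin.castSucc Fin.castSucc) ∧ ReachesAxis V (Fin.last m) 1 := by
  have hmul : ∀ (a : Fin m → K) l, (V *ᵥ Fin.snoc (α := fun _ => K) a 0) l.castSucc =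
      (V.submatrix Fin.castSucc Fin.castSucc *ᵥ a) l := fun a l => by
    simp [mulVec, dotProduct, Fin.sum_univ_castSucc]
  have hsingle : ∀ j l : Fin m, (Pi.single j.castSucc 1 : Fin (m + 1) → K) l.castSucc =
      (Pi.single j 1 : Fin m → K) l := fun j l => by
    simp [Pi.single_apply]
  refine ⟨fun hV => ⟨fun j => ?_, hV.reachesAxis _⟩, fun ⟨hV, a, ha, hx⟩ j => ?_⟩
  · obtain ⟨a, ha, ha0, hx⟩ := hV j.castSucc
    refine ⟨Fin.init a, fun i => ha _, fun i hi => ha0 _ (by simpa using hi), fun l hl => ?_⟩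
    have hlast : a (Fin.last m) = 0 := ha0 _ (Fin.castSucc_lt_last j)
    rw [← hmul, ← hsingle, ← hx l.castSucc (by simpa using hl), ← hlast, Fin.snoc_init_self]
  · induction j using Fin.lastCases with
    | last => exact ⟨a, ha, fun i hi => absurd hi (Fin.le_last i).not_gt, hx⟩
    | cast j =>
      obtain ⟨b, hb, hb0, hx⟩ := hV j
      refine ⟨Fin.snoc (α := fun _ => K) b 0, fun i => ?_, fun i hi => ?_, fun l hl => ?_⟩
      · induction i using Fin.lastCases with
        | last => simp
        | cast i => simpa using hb i
      · induction i using Fin.lastCases with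
        | last => simp
        | cast i => simpa using hb0 i (by simpa using hi)
      · induction l using Fin.lastCases with
        | last => exact absurd hl (Fin.castSucc_lt_last j).not_ge
        | cast l => rw [hmul, hsingle, hx l (by simpa using hl)]

variable [IsStrictOrderedRing K]

theorem ReachesAxis.of_submatrix {n : Type*} [Fintype n] {A : Matrix (Fin m) ι K} {j : Fin m}
    {σ : K} {e : n → ι} (h : ReachesAxis (A.submatrix id e) j σ) : ReachesAxis A j σ := by
  classical
  obtain ⟨a, ha, hx⟩ := h
  refine ⟨∑ x, a x • Pi.single (e x) 1, Finset.sum_nonneg fun x _ =>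
    smul_nonneg (ha x) (Pi.single_nonneg.2 zero_le_one), fun l hl => ?_⟩
  rw [← hx l hl, mulVec_sum, Finset.sum_apply]
  exact Finset.sum_congr rfl fun x _ => by simp [mulVec_smul, mul_comm]

theorem reachesAxis_submatrix_equiv {n : Type*} [Fintype n] {A : Matrix (Fin m) ι K} {j : Fin m}
    {σ : K} (e : n ≃ ι) : ReachesAxis (A.submatrix id e) j σ ↔ ReachesAxis A j σ :=
  ⟨.of_submatrix, fun h => .of_submatrix (e := e.symm) (by simpa using h)⟩

theorem IsFlagPositive.reachesAxis_castSucc {A : Matrix (Fin (m + 1)) ι K} {κ : Fin (m + 1)}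
    {e : Fin m → ι} (hV : IsFlagPositive (A.submatrix κ.succAbove e)) {j : Fin m}
    (hj : j.castSucc < κ) : ReachesAxis A j.castSucc 1 := by
  obtain ⟨a, ha, hx⟩ := hV.reachesAxis j
  refine .of_submatrix (e := e) ⟨a, ha, fun l hl => ?_⟩
  have hlκ : l < κ := hl.trans_lt hj
  obtain ⟨l, rfl⟩ := Fin.exists_succAbove_eq hlκ.ne
  have hsucc : κ.succAbove l = l.castSucc :=
    Fin.succAbove_of_castSucc_lt _ _ (Fin.succAbove_lt_iff_castSucc_lt _ _ |>.1 hlκ)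
  have := hx l (by simpa [hsucc] using hl)
  simpa [hsucc, Pi.single_apply, mulVec, dotProduct] using this

theorem IsFlagPositive.det_pos {V : Matrix (Fin m) (Fin m) K} (hV : IsFlagPositive V) :
    0 < V.det := by
  choose a ha ha0 hx using hV
  have hdet : (of a)ᵀ.det = ∏ i, a i i :=
    det_of_isUpperTriangular fun i j hij => ha0 j i hij
  have hmul : (V * (of a)ᵀ).det = 1 := by
    rw [det_of_isLowerTriangular]
    · exact Finset.prod_eq_one fun i _ => (hx i i le_rfl).trans (Pi.single_eq_same i 1)
    · intro i j (hij : i < j)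
      exact (hx j i hij.le).trans (Pi.single_eq_of_ne hij.ne 1)
  rw [det_mul, hdet] at hmul
  exact pos_of_mul_pos_left (hmul ▸ one_pos) (Finset.prod_nonneg fun i _ => ha i i)

theorem ReachesAxis.apply_nonneg {A : Matrix (Fin m) ι K} {j : Fin m} (hA : ReachesAxis A j 1)
    {f : Fin m → K} (hf : 0 ≤ f ᵥ* A) (hlast : ∀ l > j, f l = 0) : 0 ≤ f j := by
  obtain ⟨a, ha, hx⟩ := hA
  rw [← mul_one (f j), ← dotProduct_eq_of_last hlast hx, dotProduct_mulVec]
  exact dotProduct_nonneg_of_nonneg hf ha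

theorem toColex_nonneg_of_vecMul_nonneg {A : Matrix (Fin m) ι K} (hA : ∀ j, ReachesAxis A j 1)
    {f : Fin m → K} (hf : 0 ≤ f ᵥ* A) : 0 ≤ toColex f :=
  toColex_nonneg_of_forall_last fun j hlast => (hA j).apply_nonneg hf hlast

end FlagPositive

section Face

open Matrix

variable {ι K : Type*} [Fintype ι] [Field K] {m : ℕ} {A : Matrix (Fin m) ι K}
  {B : Matrix ι (Fin m) K} {κ : Fin m} {σ : K} {i : ι}

theorem apply_eq_of_mulVec_eq_single [DecidableEq ι] (hBA : B * A = 1) {a : ι → K}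
    (hB : ∀ l > κ, B i l = 0) (ha : ∀ l ≤ κ, (A *ᵥ a) l = (Pi.single κ σ : Fin m → K) l) :
    a i = B i κ * σ := by
  rw [← dotProduct_eq_of_last hB ha]
  change a i = (B *ᵥ A *ᵥ a) i
  rw [mulVec_mulVec, hBA, one_mulVec]

variable [LinearOrder K]

/-- The columns of `A` generating the face `C^{(κ+1)}` of the cone `C` they generate, that is, the
smallest face containing `C ∩ ker pr_{κ+1}`. -/
def faceIndices (A : Matrix (Fin m) ι K) (κ : Fin m) : Set ι :=
  {i | ∃ a, 0 ≤ a ∧ (∀ l ≤ κ, (A *ᵥ a) l = 0) ∧ 0 < a i}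

variable [DecidableEq ι]

theorem mem_faceIndices_iff (hBA : B * A = 1) (hup : ∀ j > κ, ReachesAxis A j 1) :
    i ∈ faceIndices A κ ↔ ∃ j > κ, B i j ≠ 0 := by
  constructor
  · rintro ⟨a, -, hAa, hai⟩
    by_contra! hB
    have := apply_eq_of_mulVec_eq_single (σ := 0) hBA hB (by simpa using hAa)
    simp [this] at hai
  · rintro ⟨j, hj, hBj⟩
    obtain ⟨l, hjl, hBl, hlast⟩ := exists_last_ne_zero hBj
    have hl : κ < l := lt_of_lt_of_le hj hjl
    obtain ⟨a, ha, hAa⟩ := hup l hl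
    refine ⟨a, ha, fun l' hl' => ?_, (ha i).lt_of_ne' ?_⟩
    · rw [hAa l' (hl'.trans hl.le), Pi.single_eq_of_ne (hl'.trans_lt hl).ne]
    · rwa [apply_eq_of_mulVec_eq_single hBA hlast hAa, mul_one]

theorem eq_zero_of_notMem_faceIndices (hBA : B * A = 1) (hup : ∀ j > κ, ReachesAxis A j 1)
    (hi : i ∉ faceIndices A κ) : ∀ l > κ, B i l = 0 := by
  simpa [mem_faceIndices_iff hBA hup] using hi

variable [IsStrictOrderedRing K]

theorem exists_last_pos_of_mem_faceIndices (hBA : B * A = 1) (hup : ∀ j > κ, ReachesAxis A j 1)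
    (hi : i ∈ faceIndices A κ) : ∃ l > κ, 0 < B i l ∧ ∀ l' > l, B i l' = 0 := by
  obtain ⟨j, hj, hBj⟩ := (mem_faceIndices_iff hBA hup).1 hi
  obtain ⟨l, hjl, hBl, hlast⟩ := exists_last_ne_zero hBj
  have hl : κ < l := lt_of_lt_of_le hj hjl
  have hnn : 0 ≤ B i l := (hup l hl).apply_nonneg (vecMul_nonneg_of_mul_eq_one hBA i) hlast
  exact ⟨l, hl, hnn.lt_of_ne' hBl, hlast⟩

theorem reachesAxis_iff (hAB : A * B = 1) (hBA : B * A = 1) (hup : ∀ j > κ, ReachesAxis A j 1) :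
    ReachesAxis A κ σ ↔ ∀ i ∉ faceIndices A κ, 0 ≤ B i κ * σ := by
  constructor
  · rintro ⟨a, ha, hAa⟩ i hi
    rw [← apply_eq_of_mulVec_eq_single hBA (eq_zero_of_notMem_faceIndices hBA hup hi) hAa]
    exact ha i
  · intro hσ
    have hex : ∀ i, ∃ y, 0 ≤ y ∧ (∀ l ≤ κ, (A *ᵥ y) l = 0) ∧ 0 ≤ B i κ * σ + y i := by
      intro i
      by_cases hi : i ∈ faceIndices A κ
      · obtain ⟨y, hy, hAy, hyi⟩ := hi
        refine ⟨(|B i κ * σ| / y i) • y, smul_nonneg (by positivity) hy, fun l hl => ?_, ?_⟩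
        · rw [mulVec_smul, Pi.smul_apply, hAy l hl, smul_zero]
        · rw [Pi.smul_apply, smul_eq_mul, div_mul_cancel₀ _ hyi.ne', ← neg_le_iff_add_nonneg']
          exact neg_le_abs _
      · exact ⟨0, le_rfl, by simp, by simpa using hσ i hi⟩
    choose y hy hAy hyi using hex
    refine ⟨B *ᵥ Pi.single κ σ + ∑ i, y i, fun i => ?_, fun l hl => ?_⟩
    · have hle : y i i ≤ (∑ x, y x) i := by
        rw [Finset.sum_apply]
        exact Finset.single_le_sum (fun x _ => hy x i) (Finset.mem_univ i)
      have hBi : (B *ᵥ Pi.single κ σ) i = B i κ * σ := by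
        rw [mulVec_single, Pi.smul_apply, col_apply, op_smul_eq_mul]
      rw [Pi.add_apply, hBi]
      exact (hyi i).trans (add_le_add_right hle _)
    · have hsum : ∑ i, (A *ᵥ y i) l = 0 := Finset.sum_eq_zero fun i _ => hAy i l hl
      rw [mulVec_add, mulVec_mulVec, hAB, one_mulVec, Pi.add_apply, mulVec_sum, Finset.sum_apply,
        hsum, add_zero]

end Face

section SchurComplement

open Matrix

theorem existsUnique_equiv_of_existsUnique_equiv_ne {ι : Type*} {m : ℕ} {κ : Fin (m + 1)} {i : ι}
    {p : (Fin m → ι) → Prop}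
    (h : ∃! e : Fin m ≃ {x // x ≠ i}, p (Subtype.val ∘ e)) :
    ∃! f : Fin (m + 1) ≃ ι, f κ = i ∧ p (f ∘ κ.succAbove) := by
  classical
  obtain ⟨e, he, huniq⟩ := h
  refine ⟨(finSuccEquiv' κ).trans ((Equiv.optionSubtype i).symm e), ⟨by simp, ?_⟩,
    fun f ⟨hfκ, hf⟩ => ?_⟩
  · convert he using 1
    ext j
    simp
  · let g : {g : Option (Fin m) ≃ ι // g none = i} :=
      ⟨(finSuccEquiv' κ).symm.trans f, by simpa using hfκ⟩
    have hg : Equiv.optionSubtype i g = e := huniq _ <| by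
      convert hf using 1
      ext j
      simp [g]
    rw [← hg, Equiv.symm_apply_apply]
    ext j
    simp [g]

variable {ι K : Type*} [Field K] {m : ℕ} {A : Matrix (Fin (m + 1)) ι K}
  {B : Matrix ι (Fin (m + 1)) K} {κ : Fin (m + 1)} {i : ι}

/-- The rows of `B` without their `κ`-th entries. The order of `Colex` lets them stand for the
values of the functionals `B i` at a generic point of the hyperplane `x κ = 0`: one whose other
coordinates are positive, each of them infinitely larger than the preceding ones. -/
def colexRow (B : Matrix ι (Fin (m + 1)) K) (κ : Fin (m + 1)) (i : ι) : Colex (Fin m → K) :=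
  toColex (κ.removeNth (B i))

/-- The Schur complement in `B` of its entry `B i κ`, that is, what is left of `B` after
eliminating column `κ` with pivot row `i`. -/
def schurComplement (B : Matrix ι (Fin (m + 1)) K) (κ : Fin (m + 1)) (i : ι) :
    Matrix {x // x ≠ i} (Fin m) K :=
  of fun x j => B x (κ.succAbove j) - B x κ * ((B i κ)⁻¹ * B i (κ.succAbove j))

theorem toColex_schurComplement (x : {x // x ≠ i}) :
    toColex (schurComplement B κ i x) =
      colexRow B κ x + B x κ • affineRoot (B.col κ) (colexRow B κ) i := by
  rw [affineRoot, smul_neg, ← sub_eq_add_neg]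
  rfl

theorem isEndpoint_colexRow_iff [LinearOrder K] :
    IsEndpoint (B.col κ) (colexRow B κ) i ↔
      B i κ ≠ 0 ∧ ∀ x, 0 < toColex (schurComplement B κ i x) := by
  simp only [toColex_schurComplement, Subtype.forall]
  rfl

variable [DecidableEq ι]

theorem schurComplement_mul_submatrix (hBA : B * A = 1) (hi : B i κ ≠ 0) :
    schurComplement B κ i * A.submatrix κ.succAbove (Subtype.val : {x // x ≠ i} → ι) = 1 := by
  have hsum : ∀ x y, ∑ j, B x (κ.succAbove j) * A (κ.succAbove j) y =
      (1 : Matrix ι ι K) x y - B x κ * A κ y := fun x y => by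
    rw [← hBA, mul_apply, Fin.sum_univ_succAbove _ κ, add_sub_cancel_left]
  ext x y
  have hiy : (1 : Matrix ι ι K) i y = 0 := one_apply_ne y.2.symm
  simp only [schurComplement, mul_apply, of_apply, submatrix_apply, sub_mul, mul_assoc,
    Finset.sum_sub_distrib, ← Finset.mul_sum, hsum, hiy]
  rw [zero_sub, mul_neg, inv_mul_cancel_left₀ hi, mul_neg, sub_neg_eq_add, sub_add_cancel]
  simp [one_apply, Subtype.ext_iff]

theorem colexRow_add_smul_affineRoot_ne_zero (hBA : B * A = 1) (i j : ι) (hi : B i κ ≠ 0)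
    (hji : j ≠ i) : colexRow B κ j + B j κ • affineRoot (B.col κ) (colexRow B κ) i ≠ 0 := by
  rw [← toColex_schurComplement ⟨j, hji⟩]
  exact row_ne_zero_of_mul_eq_one (schurComplement_mul_submatrix hBA hi) ⟨j, hji⟩

variable [LinearOrder K] [IsStrictOrderedRing K]

theorem IsFlagPositive.isEndpoint {e : Fin m → ι}
    (hV : IsFlagPositive (A.submatrix κ.succAbove e)) (hBA : B * A = 1) (he : ∀ j, e j ≠ i) :
    IsEndpoint (B.col κ) (colexRow B κ) i := by
  have hi : B i κ ≠ 0 := by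
    intro h0
    have hrow : κ.removeNth (B i) = 0 := by
      refine eq_zero_of_vecMul_eq_zero hV.det_pos.ne' (funext fun j => ?_)
      have := congrFun₂ hBA i (e j)
      simpa [mul_apply, Fin.sum_univ_succAbove _ κ, h0, one_apply_ne (he j).symm, vecMul,
        dotProduct, Fin.removeNth] using this
    refine row_ne_zero_of_mul_eq_one hBA i (funext fun l => ?_)
    induction l using κ.succAboveCases with
    | x => exact h0
    | p j => exact congrFun hrow j
  have hS := schurComplement_mul_submatrix hBA hi
  refine isEndpoint_colexRow_iff.2 ⟨hi, fun x => ?_⟩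
  have hnn : 0 ≤ schurComplement B κ i x ᵥ* A.submatrix κ.succAbove e :=
    fun j => vecMul_nonneg_of_mul_eq_one hS x ⟨e j, he j⟩
  exact (toColex_nonneg_of_vecMul_nonneg hV.reachesAxis hnn).lt_of_ne
    (row_ne_zero_of_mul_eq_one hS x).symm

end SchurComplement

section ExistsUnique

open Matrix

variable {ι K : Type*} [Fintype ι] [DecidableEq ι] [Field K] [LinearOrder K]
  [IsStrictOrderedRing K] {m : ℕ}

theorem exists_isEndpoint_last {A : Matrix (Fin (m + 1)) ι K} {B : Matrix ι (Fin (m + 1)) K}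
    (hBA : B * A = 1) (hcard : Fintype.card ι = m + 1) (hB : ∀ i, 0 ≤ toColex (B i)) :
    ∃ i, IsEndpoint (B.col (Fin.last m)) (colexRow B (Fin.last m)) i ∧ 0 < B i (Fin.last m) := by
  have hlast : ∀ i, 0 ≤ B i (Fin.last m) := fun i => apply_last_nonneg_of_toColex_nonneg (hB i)
  refine exists_isEndpoint_pos (colexRow_add_smul_affineRoot_ne_zero hBA)
    (feasibleSet_nonempty_of_nonneg hlast fun i => toColex_removeNth_nonneg (hB i)) ?_
  by_contra! hcol
  have h0 : ∀ i, B i (Fin.last m) = 0 := fun i => (hcol i).antisymm (hlast i)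
  have hAB : A * B = 1 := (mul_eq_one_comm_of_card_eq _ _ _ (by simp [hcard])).1 hBA
  have := congrFun₂ hAB (Fin.last m) (Fin.last m)
  simp [mul_apply, h0] at this

theorem isFlagPositive_submatrix_succ_iff {A : Matrix (Fin (m + 1)) ι K}
    {B : Matrix ι (Fin (m + 1)) K} (hAB : A * B = 1) (hBA : B * A = 1)
    (hB : ∀ i, 0 ≤ B i (Fin.last m)) (f : Fin (m + 1) ≃ ι) :
    IsFlagPositive (A.submatrix id f) ↔
      IsFlagPositive (A.submatrix Fin.castSucc (f ∘ Fin.castSucc)) := by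
  refine isFlagPositive_succ_iff.trans (and_iff_left ?_)
  rw [reachesAxis_submatrix_equiv, reachesAxis_iff hAB hBA fun j hj =>
    absurd hj (Fin.le_last j).not_gt]
  exact fun i _ => by simpa using hB i

theorem existsUnique_isFlagPositive {A : Matrix (Fin m) ι K} {B : Matrix ι (Fin m) K}
    (hBA : B * A = 1) (hcard : Fintype.card ι = m) (hB : ∀ i, 0 ≤ toColex (B i)) :
    ∃! e : Fin m ≃ ι, IsFlagPositive (A.submatrix id e) := by
  induction m generalizing ι with
  | zero =>
    have : IsEmpty ι := Fintype.card_eq_zero_iff.1 hcard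
    exact ⟨Equiv.equivOfIsEmpty _ _, fun j => j.elim0, fun e _ => Subsingleton.elim _ _⟩
  | succ m ih =>
    have hAB : A * B = 1 := (mul_eq_one_comm_of_card_eq _ _ _ (by simp [hcard])).1 hBA
    have hlast : ∀ i, 0 ≤ B i (Fin.last m) := fun i => apply_last_nonneg_of_toColex_nonneg (hB i)
    obtain ⟨i₀, hi₀, hpos⟩ := exists_isEndpoint_last hBA hcard hB
    have hface := ih (schurComplement_mul_submatrix hBA hi₀.1) (by simp [hcard])
      fun x => ((isEndpoint_colexRow_iff.1 hi₀).2 x).le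
    refine (existsUnique_congr fun f => ?_).1 (existsUnique_equiv_of_existsUnique_equiv_ne
      (κ := Fin.last m) (p := fun e => IsFlagPositive (A.submatrix Fin.castSucc e))
      (by simpa using hface))
    rw [isFlagPositive_submatrix_succ_iff hAB hBA hlast, Fin.succAbove_last]
    refine and_iff_right_of_imp fun hf => ?_
    rw [← Fin.succAbove_last] at hf
    have hend := hf.isEndpoint (i := f (Fin.last m)) hBA fun j => by simp
    exact hend.eq_of_pos hi₀ ((hlast _).lt_of_ne' hend.1) hpos

end ExistsUnique

section WPO

open Matrix

variable {ι K : Type*} [Fintype ι] [DecidableEq ι] [Field K] [LinearOrder K]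
  {m : ℕ} {A : Matrix (Fin (m + 1)) ι K} {B : Matrix ι (Fin (m + 1)) K}
  {κ : Fin (m + 1)} {i : ι} {w w' : Fin (m + 1) ≃ ι}

/-- The rows of `B` not in `faceIndices A κ`. When `B` is the inverse of `A`, they define the
facets of the cone generated by the columns of `A` that contain the face `C^{(κ+1)}`. -/
def outerRows (A : Matrix (Fin (m + 1)) ι K) (B : Matrix ι (Fin (m + 1)) K) (κ : Fin (m + 1)) :
    Matrix {i // i ∉ faceIndices A κ} (Fin (m + 1)) K :=
  B.submatrix Subtype.val id

/-- The interval in which the cone defined by `outerRows A B κ` meets a generic line parallel to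
the `κ`-th axis (see `colexRow`). -/
def genericSlice (A : Matrix (Fin (m + 1)) ι K) (B : Matrix ι (Fin (m + 1)) K)
    (κ : Fin (m + 1)) : Set (Colex (Fin m → K)) :=
  feasibleSet ((outerRows A B κ).col κ) (colexRow (outerRows A B κ) κ)

theorem outerRows_mul_submatrix (hBA : B * A = 1) :
    outerRows A B κ * A.submatrix id (Subtype.val : {i // i ∉ faceIndices A κ} → ι) = 1 := by
  rw [outerRows, ← submatrix_mul _ _ _ _ _ Function.bijective_id, hBA,
    submatrix_one _ Subtype.val_injective]

variable [IsStrictOrderedRing K]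

theorem isEndpoint_outerRows_iff (hBA : B * A = 1) (hup : ∀ j > κ, ReachesAxis A j 1)
    (i : {i // i ∉ faceIndices A κ}) :
    IsEndpoint ((outerRows A B κ).col κ) (colexRow (outerRows A B κ) κ) i ↔
      IsEndpoint (B.col κ) (colexRow B κ) i := by
  refine and_congr_right fun _ => ⟨fun h j hj => ?_, fun h j hj => h j (Subtype.coe_ne_coe.2 hj)⟩
  by_cases hjF : j ∈ faceIndices A κ
  · obtain ⟨l, hl, hpos, hlast⟩ := exists_last_pos_of_mem_faceIndices hBA hup hjF
    have hB : ∀ l > κ, B i l = 0 := eq_zero_of_notMem_faceIndices hBA hup i.2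
    obtain ⟨l, rfl⟩ := Fin.exists_succAbove_eq hl.ne'
    refine (toColex_pos_of_last_pos (j := l) ?_ fun l' hl' => ?_).trans_eq
      (toColex_schurComplement ⟨j, hj⟩)
    · simpa [schurComplement, hB _ hl] using hpos
    · have hll' : κ.succAbove l < κ.succAbove l' := Fin.strictMono_succAbove κ hl'
      simp [schurComplement, hlast _ hll', hB _ (hl.trans hll')]
  · exact h ⟨j, hjF⟩ (Subtype.coe_ne_coe.1 hj)

/-- The tuple of columns of `A` arranged by `w` is `(κ+1)`-WPO. -/
def IsWPO (A : Matrix (Fin (m + 1)) ι K) (κ : Fin (m + 1)) (w : Fin (m + 1) ≃ ι) : Prop :=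
  IsFlagPositive (A.submatrix κ.succAbove (w ∘ κ.succAbove)) ∧ w κ ∉ faceIndices A κ

theorem IsWPO.isEndpoint (hw : IsWPO A κ w) (hBA : B * A = 1) :
    IsEndpoint (B.col κ) (colexRow B κ) (w κ) :=
  hw.1.isEndpoint hBA fun j => by simp

theorem existsUnique_isWPO (hBA : B * A = 1) (hcard : Fintype.card ι = m + 1)
    (hi : IsEndpoint (B.col κ) (colexRow B κ) i) (hiF : i ∉ faceIndices A κ) :
    ∃! w : Fin (m + 1) ≃ ι, w κ = i ∧ IsWPO A κ w := by
  have hface := existsUnique_isFlagPositive (schurComplement_mul_submatrix hBA hi.1)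
    (by simp [hcard]) fun x => ((isEndpoint_colexRow_iff.1 hi).2 x).le
  refine (existsUnique_congr fun w => and_congr_right fun hw => ?_).1
    (existsUnique_equiv_of_existsUnique_equiv_ne (κ := κ)
      (p := fun e => IsFlagPositive (A.submatrix κ.succAbove e)) (by simpa using hface))
  rw [IsWPO, hw, and_iff_left hiF]

theorem IsWPO.det_mul_pos (hw : IsWPO A κ w) (hBA : B * A = 1) :
    0 < (A.submatrix id w).det * B (w κ) κ := by
  have hinv : B.submatrix w id * A.submatrix id w = 1 := by
    rw [← submatrix_mul _ _ _ _ _ Function.bijective_id, hBA, submatrix_one_equiv]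
  have hadj : (A.submatrix id w).adjugate = (A.submatrix id w).det • B.submatrix w id := by
    rw [← one_mul (adjugate _), ← hinv, Matrix.mul_assoc, mul_adjugate, Matrix.mul_smul,
      Matrix.mul_one]
  have hminor := adjugate_fin_succ_eq_det_submatrix (A.submatrix id w) κ κ
  rw [hadj, Even.neg_one_pow ⟨κ, rfl⟩, one_mul, submatrix_submatrix] at hminor
  exact hw.1.det_pos.trans_eq hminor.symm

theorem IsWPO.eq_of_mul_pos (hw : IsWPO A κ w) (hw' : IsWPO A κ w') (hBA : B * A = 1)
    (h : 0 < (A.submatrix id w).det * (A.submatrix id w').det) : w = w' := by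
  have hcard : Fintype.card ι = m + 1 := by simpa using (Fintype.card_congr w).symm
  have hκ : w κ = w' κ := by
    refine (hw.isEndpoint hBA).eq_of_mul_pos (hw'.isEndpoint hBA) ?_
    have := mul_pos (hw.det_mul_pos hBA) (hw'.det_mul_pos hBA)
    rw [mul_mul_mul_comm] at this
    exact pos_of_mul_pos_right this h.le
  exact (existsUnique_isWPO hBA hcard (hw'.isEndpoint hBA) hw'.2).unique ⟨hκ, hw⟩ ⟨rfl, hw'⟩

theorem exists_isWPO_iff (hBA : B * A = 1) (hcard : Fintype.card ι = m + 1)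
    (hup : ∀ j > κ, ReachesAxis A j 1) {p : ι → Prop} :
    (∃ w, IsWPO A κ w ∧ p (w κ)) ↔ ∃ i : {i // i ∉ faceIndices A κ},
      IsEndpoint ((outerRows A B κ).col κ) (colexRow (outerRows A B κ) κ) i ∧ p i := by
  simp only [isEndpoint_outerRows_iff hBA hup]
  constructor
  · rintro ⟨w, hw, hp⟩
    exact ⟨⟨w κ, hw.2⟩, hw.isEndpoint hBA, hp⟩
  · rintro ⟨⟨i, hiF⟩, hi, hp⟩
    obtain ⟨w, rfl, hw⟩ := (existsUnique_isWPO hBA hcard hi hiF).exists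
    exact ⟨w, hw, hp⟩

theorem exists_isWPO_det_pos_iff (hBA : B * A = 1) (hcard : Fintype.card ι = m + 1)
    (hup : ∀ j > κ, ReachesAxis A j 1) :
    (∃ w, IsWPO A κ w ∧ 0 < (A.submatrix id w).det) ↔
      (genericSlice A B κ).Nonempty ∧ ∃ i ∉ faceIndices A κ, 0 < B i κ := by
  calc (∃ w, IsWPO A κ w ∧ 0 < (A.submatrix id w).det)
    _ ↔ ∃ w, IsWPO A κ w ∧ 0 < B (w κ) κ := exists_congr fun w => and_congr_right fun hw =>
      pos_iff_pos_of_mul_pos (hw.det_mul_pos hBA)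
    _ ↔ ∃ i, IsEndpoint ((outerRows A B κ).col κ) (colexRow (outerRows A B κ) κ) i ∧
        0 < (outerRows A B κ).col κ i := exists_isWPO_iff hBA hcard hup (p := (0 < B · κ))
    _ ↔ (genericSlice A B κ).Nonempty ∧ ∃ i, 0 < (outerRows A B κ).col κ i :=
      exists_isEndpoint_pos_iff
        (colexRow_add_smul_affineRoot_ne_zero (outerRows_mul_submatrix hBA))
    _ ↔ _ := by simp [outerRows]

theorem exists_isWPO_det_neg_iff (hBA : B * A = 1) (hcard : Fintype.card ι = m + 1)
    (hup : ∀ j > κ, ReachesAxis A j 1) :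
    (∃ w, IsWPO A κ w ∧ (A.submatrix id w).det < 0) ↔
      (genericSlice A B κ).Nonempty ∧ ∃ i ∉ faceIndices A κ, B i κ < 0 := by
  calc (∃ w, IsWPO A κ w ∧ (A.submatrix id w).det < 0)
    _ ↔ ∃ w, IsWPO A κ w ∧ B (w κ) κ < 0 := exists_congr fun w => and_congr_right fun hw =>
      neg_iff_neg_of_mul_pos (hw.det_mul_pos hBA)
    _ ↔ ∃ i, IsEndpoint ((outerRows A B κ).col κ) (colexRow (outerRows A B κ) κ) i ∧
        (outerRows A B κ).col κ i < 0 := exists_isWPO_iff hBA hcard hup (p := (B · κ < 0))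
    _ ↔ (genericSlice A B κ).Nonempty ∧ ∃ i, (outerRows A B κ).col κ i < 0 :=
      exists_isEndpoint_neg_iff
        (colexRow_add_smul_affineRoot_ne_zero (outerRows_mul_submatrix hBA))
    _ ↔ _ := by simp [outerRows]

theorem genericSlice_nonempty (hBA : B * A = 1) (hA : ∀ j, ReachesAxis A j 1)
    (hnn : ∀ i ∉ faceIndices A κ, 0 ≤ B i κ) : (genericSlice A B κ).Nonempty := by
  have hB : ∀ i, 0 ≤ toColex (B i) := fun i =>
    toColex_nonneg_of_vecMul_nonneg hA (vecMul_nonneg_of_mul_eq_one hBA i)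
  exact feasibleSet_nonempty_of_nonneg (fun i => hnn i i.2) fun i hi =>
    toColex_removeNth_nonneg (hB i) hi

theorem forall_reachesAxis_iff (hAB : A * B = 1) (hBA : B * A = 1)
    (hcard : Fintype.card ι = m + 1) (hup : ∀ j > κ, ReachesAxis A j 1)
    (hpos : ∃ i ∉ faceIndices A κ, 0 < B i κ) :
    (∀ j, ReachesAxis A j 1) ↔
      (genericSlice A B κ).Nonempty ∧ ∀ i ∉ faceIndices A κ, 0 ≤ B i κ := by
  have hκ : ReachesAxis A κ 1 ↔ ∀ i ∉ faceIndices A κ, 0 ≤ B i κ := by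
    simpa using reachesAxis_iff hAB hBA hup (σ := 1)
  refine ⟨fun hA => ⟨genericSlice_nonempty hBA hA (hκ.1 (hA κ)), hκ.1 (hA κ)⟩,
    fun ⟨hne, hnn⟩ j => ?_⟩
  rcases lt_trichotomy j κ with hj | rfl | hj
  · obtain ⟨w, hw, -⟩ := (exists_isWPO_det_pos_iff hBA hcard hup).2 ⟨hne, hpos⟩
    obtain ⟨j, rfl⟩ := Fin.exists_castSucc_eq.2 (hj.trans_le (Fin.le_last κ)).ne
    exact hw.1.reachesAxis_castSucc hj
  · exact hκ.2 hnn
  · exact hup j hj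

end WPO

section SignedSum

variable {α K : Type*} [Field K] [LinearOrder K] [IsStrictOrderedRing K] {s : Finset α} {d : α → K}
  (habs : ∀ a ∈ s, ∀ b ∈ s, |d a| = |d b|) (hinj : ∀ a ∈ s, ∀ b ∈ s, 0 < d a * d b → a = b)

include habs hinj

theorem sum_eq_zero_of_exists_pos_neg {a b : α} (ha : a ∈ s) (hb : b ∈ s) (hda : 0 < d a)
    (hdb : d b < 0) : ∑ x ∈ s, d x = 0 := by
  have hab : a ≠ b := fun h => hdb.not_gt (h ▸ hda)
  have hneg : d a = -d b := by
    rw [← abs_of_pos hda, habs a ha b hb, abs_of_neg hdb]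
  rw [Finset.sum_eq_add_of_mem a b ha hb hab, hneg, neg_add_cancel]
  rintro x hx ⟨hxa, hxb⟩
  by_contra hdx
  rcases lt_or_gt_of_ne hdx with h | h
  · exact hxb (hinj x hx b hb (mul_pos_of_neg_of_neg h hdb))
  · exact hxa (hinj x hx a ha (mul_pos h hda))

theorem sum_pos_iff_of_abs_eq :
    0 < ∑ x ∈ s, d x ↔ (∃ a ∈ s, 0 < d a) ∧ ¬∃ a ∈ s, d a < 0 := by
  constructor
  · intro h
    obtain ⟨a, ha, hda⟩ : ∃ a ∈ s, 0 < d a := by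
      by_contra! hle
      exact h.not_ge (Finset.sum_nonpos hle)
    refine ⟨⟨a, ha, hda⟩, fun ⟨b, hb, hdb⟩ => h.ne' ?_⟩
    exact sum_eq_zero_of_exists_pos_neg habs hinj ha hb hda hdb
  · rintro ⟨hpos, hneg⟩
    push Not at hneg
    exact Finset.sum_pos' hneg hpos

theorem sum_neg_iff_of_abs_eq :
    ∑ x ∈ s, d x < 0 ↔ (∃ a ∈ s, d a < 0) ∧ ¬∃ a ∈ s, 0 < d a := by
  simpa using sum_pos_iff_of_abs_eq (d := -d) (by simpa using habs) (by simpa using hinj)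

theorem sum_ne_zero_iff_existsUnique (h0 : ∀ a ∈ s, d a ≠ 0) :
    ∑ x ∈ s, d x ≠ 0 ↔ ∃! a, a ∈ s := by
  constructor
  · intro h
    obtain ⟨a, ha, -⟩ := Finset.exists_ne_zero_of_sum_ne_zero h
    refine ⟨a, ha, fun b hb => hinj b hb a ha (not_le.1 fun hle => h ?_)⟩
    rcases mul_neg_iff.1 (hle.lt_of_ne (mul_ne_zero (h0 b hb) (h0 a ha))) with
      ⟨hdb, hda⟩ | ⟨hdb, hda⟩
    · exact sum_eq_zero_of_exists_pos_neg habs hinj hb ha hdb hda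
    · exact sum_eq_zero_of_exists_pos_neg habs hinj ha hb hda hdb
  · rintro ⟨a, ha, huniq⟩
    rw [Finset.sum_eq_single_of_mem a ha fun b hb hba => absurd (huniq b hb) hba]
    exact h0 a ha

end SignedSum

section SumDet

open Matrix

variable {K : Type*} [Field K] [LinearOrder K] [IsStrictOrderedRing K] {m : ℕ}
  {A B : Matrix (Fin (m + 1)) (Fin (m + 1)) K} {κ : Fin (m + 1)}

theorem abs_det_submatrix_perm {n : Type*} [Fintype n] [DecidableEq n] (A : Matrix n n K)
    (w : Equiv.Perm n) : |(A.submatrix id w).det| = |A.det| := by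
  rw [det_permute', abs_mul, ← Int.cast_abs, Int.abs_eq_natAbs, Int.units_natAbs]
  simp

theorem sum_det_ne_zero_iff (hBA : B * A = 1) :
    ∑ w : Equiv.Perm (Fin (m + 1)) with IsWPO A κ w, (A.submatrix id w).det ≠ 0 ↔
      ∃! w : Equiv.Perm (Fin (m + 1)), IsWPO A κ w := by
  have h := sum_ne_zero_iff_existsUnique
    (s := {w : Equiv.Perm (Fin (m + 1)) | IsWPO A κ w}) (d := fun w => (A.submatrix id w).det)
    (by simp [abs_det_submatrix_perm])
    (fun w hw w' hw' => IsWPO.eq_of_mul_pos (by simpa using hw) (by simpa using hw') hBA)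
    fun w hw => left_ne_zero_of_mul (IsWPO.det_mul_pos (by simpa using hw) hBA).ne'
  simpa using h

theorem sum_det_pos_iff (hBA : B * A = 1) (hup : ∀ j > κ, ReachesAxis A j 1) :
    0 < ∑ w : Equiv.Perm (Fin (m + 1)) with IsWPO A κ w, (A.submatrix id w).det ↔
      (genericSlice A B κ).Nonempty ∧ (∃ i ∉ faceIndices A κ, 0 < B i κ) ∧
        ¬∃ i ∉ faceIndices A κ, B i κ < 0 := by
  rw [sum_pos_iff_of_abs_eq (by simp [abs_det_submatrix_perm]) fun w hw w' hw' =>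
    IsWPO.eq_of_mul_pos (by simpa using hw) (by simpa using hw') hBA]
  simp only [Finset.mem_filter_univ, exists_isWPO_det_pos_iff hBA (Fintype.card_fin _) hup,
    exists_isWPO_det_neg_iff hBA (Fintype.card_fin _) hup]
  rw [and_assoc]
  exact and_congr_right fun hne => by rw [and_iff_right hne]

theorem sum_det_neg_iff (hBA : B * A = 1) (hup : ∀ j > κ, ReachesAxis A j 1) :
    ∑ w : Equiv.Perm (Fin (m + 1)) with IsWPO A κ w, (A.submatrix id w).det < 0 ↔
      (genericSlice A B κ).Nonempty ∧ (∃ i ∉ faceIndices A κ, B i κ < 0) ∧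
        ¬∃ i ∉ faceIndices A κ, 0 < B i κ := by
  rw [sum_neg_iff_of_abs_eq (by simp [abs_det_submatrix_perm]) fun w hw w' hw' =>
    IsWPO.eq_of_mul_pos (by simpa using hw) (by simpa using hw') hBA]
  simp only [Finset.mem_filter_univ, exists_isWPO_det_pos_iff hBA (Fintype.card_fin _) hup,
    exists_isWPO_det_neg_iff hBA (Fintype.card_fin _) hup]
  rw [and_assoc]
  exact and_congr_right fun hne => by rw [and_iff_right hne]

theorem sum_det_kWPO_general (hA : IsUnit A) (hup : ∀ j > κ, ReachesAxis A j 1) {lam : K}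
    (hlam : lam = ∑ w : Equiv.Perm (Fin (m + 1)) with IsWPO A κ w, (A.submatrix id w).det) :
    (lam ≠ 0 ↔ ∃! w : Equiv.Perm (Fin (m + 1)), IsWPO A κ w) ∧
    (0 < lam ↔ lam ≠ 0 ∧ ReachesAxis A κ 1) ∧
    (0 < lam ↔ lam ≠ 0 ∧ ¬ReachesAxis A κ (-1)) ∧
    (0 < lam ↔ (∀ j, ReachesAxis A j 1) ∧ ¬ReachesAxis A κ (-1)) := by
  obtain ⟨B, hAB, hBA⟩ := isUnit_iff_exists.1 hA
  have hpos := hlam ▸ sum_det_pos_iff hBA hup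
  have hneg := hlam ▸ sum_det_neg_iff hBA hup
  have hreach : ReachesAxis A κ 1 ↔ ¬∃ i ∉ faceIndices A κ, B i κ < 0 := by
    simp [reachesAxis_iff hAB hBA hup]
  have hreach_neg : ReachesAxis A κ (-1) ↔ ¬∃ i ∉ faceIndices A κ, 0 < B i κ := by
    simp [reachesAxis_iff hAB hBA hup]
  have hall : (∃ i ∉ faceIndices A κ, 0 < B i κ) →
      ((∀ j, ReachesAxis A j 1) ↔ (genericSlice A B κ).Nonempty ∧ ReachesAxis A κ 1) := by
    intro hP
    rw [forall_reachesAxis_iff hAB hBA (Fintype.card_fin _) hup hP, hreach]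
    simp
  refine ⟨hlam ▸ sum_det_ne_zero_iff hBA, ?_⟩
  rw [ne_iff_lt_or_gt]
  generalize (∃ i ∉ faceIndices A κ, 0 < B i κ) = P at hpos hneg hreach_neg hall
  generalize (∃ i ∉ faceIndices A κ, B i κ < 0) = N at hpos hneg hreach
  grind only

end SumDet

section Translation

open Matrix

theorem mulVec_image_nonneg {s : ℕ} (u : Fin s → Fin s → ℝ) :
    (of u)ᵀ.mulVec '' {a | 0 ≤ a} =
      {x | ∃ lam : Fin s → ℝ, (∀ i, 0 ≤ lam i) ∧ x = ∑ i, lam i • u i} := by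
  ext x
  simp only [mulVec_transpose, vecMul_eq_sum, Set.mem_image, Set.mem_ofPred_eq, eq_comm (a := x)]
  rfl

theorem smul_lastUnit_mem_image_prProj_iff {s : ℕ} {C : Set (Fin s → ℝ)} {j : Fin s} {σ : ℝ} :
    σ • lastUnit (j + 1) ∈ prProj (j + 1) j.isLt '' C ↔
      ∃ x ∈ C, ∀ l ≤ j, x l = (Pi.single j σ : Fin s → ℝ) l := by
  refine exists_congr fun x => and_congr_right fun _ => ⟨fun h l hl => ?_, fun h => ?_⟩
  · simpa [prProj, lastUnit, Pi.single_apply, Fin.ext_iff] using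
      congrFun h ⟨l, Nat.lt_succ_of_le hl⟩
  · ext l
    simpa [prProj, lastUnit, Pi.single_apply, Fin.ext_iff] using
      h (Fin.castLE j.isLt l) (Nat.lt_succ_iff.1 l.isLt)

theorem smul_lastUnit_mem_iff_reachesAxis {s : ℕ} {u : Fin s → Fin s → ℝ} {j : Fin s} {σ : ℝ} :
    σ • lastUnit (j + 1) ∈ prProj (j + 1) j.isLt '' ((of u)ᵀ.mulVec '' {a | 0 ≤ a}) ↔
      ReachesAxis (of u)ᵀ j σ := by
  rw [smul_lastUnit_mem_image_prProj_iff, Set.exists_mem_image]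
  rfl

theorem isPositiveCone_iff {s : ℕ} {C : Set (Fin s → ℝ)} :
    IsPositiveCone C ↔ ∀ j : Fin s, lastUnit (j + 1) ∈ prProj (j + 1) j.isLt '' C := by
  refine ⟨fun h j => h _ (Nat.le_add_left 1 j) _, fun h k hk hks => ?_⟩
  obtain ⟨k, rfl⟩ := Nat.exists_eq_add_of_le' hk
  exact h ⟨k, hks⟩

theorem isPositiveCone_iff_reachesAxis {s : ℕ} {u : Fin s → Fin s → ℝ} :
    IsPositiveCone ((of u)ᵀ.mulVec '' {a | 0 ≤ a}) ↔ ∀ j, ReachesAxis (of u)ᵀ j 1 := by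
  simp only [isPositiveCone_iff, ← smul_lastUnit_mem_iff_reachesAxis, one_smul]

theorem positivelyOrdered_iff_isFlagPositive {m : ℕ} {v : Fin m → Fin m → ℝ} :
    PositivelyOrdered v ↔ IsFlagPositive (of v)ᵀ := by
  have hcoord : ∀ {k} (hk : k ≤ m) (a : Fin m → ℝ) l,
      (∑ i, a i • prProj k hk (v i)) l = ((of v)ᵀ *ᵥ a) (Fin.castLE hk l) := fun hk a l => by
    simp [prProj, mulVec_transpose, vecMul_eq_sum, Finset.sum_apply]
  constructor
  · intro h j
    have hj := isPositiveCone_iff.1 (h (j + 1) (Nat.le_add_left 1 j) j.isLt) (Fin.last j)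
    rw [← one_smul ℝ (lastUnit _), smul_lastUnit_mem_image_prProj_iff] at hj
    obtain ⟨_, ⟨a, ha, ha0, rfl⟩, hx⟩ := hj
    refine ⟨a, ha, fun i hi => ha0 i fun h => hi.not_ge (Nat.lt_succ_iff.1 h), fun l hl => ?_⟩
    have hxl := hx ⟨l, Nat.lt_succ_of_le hl⟩ (Fin.le_last _)
    rw [hcoord] at hxl
    simpa [Pi.single_apply, Fin.ext_iff] using hxl
  · intro h k _ hkm
    refine isPositiveCone_iff.2 fun j => ?_
    rw [← one_smul ℝ (lastUnit _), smul_lastUnit_mem_image_prProj_iff]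
    obtain ⟨a, ha, ha0, hx⟩ := h (Fin.castLE hkm j)
    refine ⟨_, ⟨a, ha, fun i hi => ha0 i ?_, rfl⟩, fun l hl => ?_⟩
    · exact Fin.lt_def.2 (j.isLt.trans_le (not_lt.1 hi))
    · rw [hcoord, hx (Fin.castLE hkm l) hl]
      simp [Pi.single_apply]

theorem prProj_eq_zero_iff {s k : ℕ} {hk : k ≤ s} {x : Fin s → ℝ} :
    prProj k hk x = 0 ↔ ∀ l : Fin s, (l : ℕ) < k → x l = 0 :=
  ⟨fun h l hl => congrFun h ⟨l, hl⟩, fun h => funext fun l => h _ l.isLt⟩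

theorem setOf_prProj_eq_zero_eq_faceIndices {s : ℕ} {u : Fin s → Fin s → ℝ} {κ : Fin s} :
    {i | ∃ mu : Fin s → ℝ, (∀ l, 0 ≤ mu l) ∧
      prProj (κ + 1) κ.isLt (∑ l, mu l • u l) = 0 ∧ 0 < mu i} = faceIndices (of u)ᵀ κ := by
  ext i
  simp only [prProj_eq_zero_iff, faceIndices, mulVec_transpose, vecMul_eq_sum, Nat.lt_succ_iff]
  rfl

theorem generator_mem_face_iff {ι K M : Type*} [Fintype ι] [Ring K] [PartialOrder K]
    [ZeroLEOneClass K] [Nontrivial K] [AddCommGroup M] [Module K M] {u : ι → M}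
    (hu : LinearIndependent K u) {J : Set ι} {i : ι} :
    (∃ lam : ι → K, (∀ j, 0 ≤ lam j) ∧ (∀ j, j ∉ J → lam j = 0) ∧ u i = ∑ j, lam j • u j) ↔
      i ∈ J := by
  classical
  have hsingle : Fintype.linearCombination K u (Pi.single i 1) = u i := by
    rw [Fintype.linearCombination_apply_single, one_smul]
  constructor
  · rintro ⟨a, -, ha0, hua⟩
    by_contra hi
    have ha : Pi.single i 1 = a := hu.fintypeLinearCombination_injective (hsingle.trans hua)
    simpa [← ha] using ha0 i hi
  · intro hi
    refine ⟨Pi.single i 1, Pi.single_nonneg.2 zero_le_one, fun j hj => ?_, hsingle.symm⟩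
    exact Pi.single_eq_of_ne (ne_of_mem_of_not_mem hi hj).symm 1

theorem skipIdx_eq_succAbove {n : ℕ} (κ : Fin (n + 1)) (j : Fin n) :
    skipIdx (n + 1) (κ + 1) j = κ.succAbove j := by
  unfold skipIdx
  split_ifs with h
  · rw [Fin.succAbove_of_castSucc_lt _ _ (by rw [Fin.lt_def]; exact h)]
    rfl
  · rw [Fin.succAbove_of_le_castSucc _ _ (by rw [Fin.le_def]; exact not_lt.1 h)]
    rfl

end Translation

/-- Lemma on sums of determinants over `k`-weakly positively ordered
permutations of the generators of a full-dimensional simplicial cone. -/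
theorem sum_det_kWPO {s : ℕ}
    (u : Fin s → (Fin s → ℝ)) (hu : LinearIndependent ℝ u)
    (k : ℕ) (hk1 : 1 < k) (hks : k ≤ s)
    (C : Set (Fin s → ℝ))
    (hC : C = {x | ∃ lam : Fin s → ℝ, (∀ i, 0 ≤ lam i) ∧ x = ∑ i, lam i • u i})
    (hupper : ∀ j, k < j → ∀ hj : j ≤ s, lastUnit j ∈ prProj j hj '' C)
    (Jk : Set (Fin s))
    (hJk : Jk = {i | ∃ mu : Fin s → ℝ, (∀ l, 0 ≤ mu l) ∧
      prProj k hks (∑ l, mu l • u l) = 0 ∧ 0 < mu i})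
    (Cface : Set (Fin s → ℝ))
    (hCface : Cface = {x | ∃ lam : Fin s → ℝ, (∀ i, 0 ≤ lam i) ∧
      (∀ i, i ∉ Jk → lam i = 0) ∧ x = ∑ i, lam i • u i})
    (kWPO : Equiv.Perm (Fin s) → Prop)
    (hkWPO : ∀ w, kWPO w ↔
      (PositivelyOrdered (fun j : Fin (s - 1) => fun i : Fin (s - 1) =>
          u (w (skipIdx s k j)) (skipIdx s k i)) ∧
        u (w ⟨k - 1, by omega⟩) ∉ Cface))
    (lam : ℝ)
    (hlam : lam = ∑ w ∈ Finset.univ.filter (fun w : Equiv.Perm (Fin s) => kWPO w),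
      Matrix.det (Matrix.of fun i j : Fin s => u (w j) i)) :
    (lam ≠ 0 ↔ ∃! w : Equiv.Perm (Fin s), kWPO w) ∧
    ((0 < lam) ↔ (lam ≠ 0 ∧ lastUnit k ∈ prProj k hks '' C)) ∧
    ((0 < lam) ↔ (lam ≠ 0 ∧ (-lastUnit k) ∉ prProj k hks '' C)) ∧
    ((0 < lam) ↔ (IsPositiveCone C ∧ (-lastUnit k) ∉ prProj k hks '' C)) := by
  obtain ⟨n, rfl⟩ : ∃ n, s = n + 1 := Nat.exists_eq_add_of_le' (by omega)
  obtain ⟨κ, rfl⟩ : ∃ κ : Fin (n + 1), k = κ + 1 := ⟨⟨k - 1, by omega⟩, by simp; omega⟩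
  have hA : IsUnit (Matrix.of u).transpose := Matrix.linearIndependent_cols_iff_isUnit.1 hu
  rw [← mulVec_image_nonneg] at hC
  rw [setOf_prProj_eq_zero_eq_faceIndices] at hJk
  subst hC hJk hCface
  have hup : ∀ j > κ, ReachesAxis (Matrix.of u).transpose j 1 := fun j hj => by
    rw [← smul_lastUnit_mem_iff_reachesAxis, one_smul]
    exact hupper (j + 1) (Nat.succ_lt_succ hj) j.isLt
  obtain rfl : kWPO = IsWPO (Matrix.of u).transpose κ := funext fun w => propext <| by
    rw [hkWPO, positivelyOrdered_iff_isFlagPositive, Set.mem_ofPred_eq, generator_mem_face_iff hu]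
    simp only [skipIdx_eq_succAbove]
    rfl
  have h := sum_det_kWPO_general hA hup hlam
  rwa [← smul_lastUnit_mem_iff_reachesAxis, one_smul, ← smul_lastUnit_mem_iff_reachesAxis,
    neg_one_smul, ← isPositiveCone_iff_reachesAxis] at h

end
end
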